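/- arXiv:2311.03868 — 3 statements merged into one kernel-verified Lean document; each statement's English description precedes it below -/
import Mathlib

section
/- Let P and Q be B-partitions of a standard Borel probability space such that Q is obtained from P by splitting some of its finite classes into smaller parts. If P has the re-randomizing property, then so does Q. -/
open MeasureTheory

/-- The class of the partition (setoid) `s` containing `x`. -/
def Setoid.cls {J : Type*} (s : Setoid J) (x : J) : Set J := {y | s.r x y}

/-- The saturation of a set `A`: the union of all classes of `s` meeting `A`. -/
def Setoid.sat {J : Type*} (s : Setoid J) (A : Set J) : Set J := {x | ∃ y ∈ A, s.r x y}

/-- A partition is a `B`-partition if the saturation of every Borel (measurable) set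
is Borel (measurable). -/
def IsBPartition {J : Type*} [MeasurableSpace J] (s : Setoid J) : Prop :=
  ∀ A : Set J, MeasurableSet A → MeasurableSet (s.sat A)

open scoped Classical

/-- The probability that, picking a `π`-random point and re-randomizing it along `s`
(i.e. replacing it by a uniform random point of its class when that class is finite,
keeping it otherwise), the resulting point lies in `A`. -/
noncomputable def rerandProb {J : Type*} [MeasurableSpace J] (s : Setoid J)
    (π : MeasureTheory.Measure J) (A : Set J) : ℝ :=
  ∫ x, (if (s.cls x).Finite then (Nat.card ↥(s.cls x ∩ A) : ℝ) / (Nat.card ↥(s.cls x))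
        else A.indicator 1 x) ∂π

/-- A partition `s` has the re-randomizing property with respect to `π` if re-randomizing
a `π`-random point along `s` again yields a point distributed according to `π`. -/
def HasRerand {J : Type*} [MeasurableSpace J] (s : Setoid J)
    (π : MeasureTheory.Measure J) : Prop :=
  ∀ A : Set J, MeasurableSet A → rerandProb s π A = (π A).toReal

/-!
For a `B`-partition `s`, re-randomizing along `s` is a Markov kernel, and `s` has the re-randomizing
property exactly when `π` is invariant under it. If `Q` splits finite classes of `P`, then
re-randomizing first along `P` and then along `Q` has the same law as re-randomizing along `P`
alone: the kernel of `Q` is symmetric on pairs of points, so the uniform law on a finite union of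
classes of `Q` is reversible, hence invariant, under it. Therefore, if `π` is invariant under the
kernel of `P`, it is also invariant under that of `Q`.
-/

open ProbabilityTheory
open scoped ENNReal

lemma exists_finset_injOn_restrict {α ι β : Type*} {f : α → ι → β} (hf : Function.Injective f)
    {T : Set α} (hT : T.Finite) : ∃ I : Finset ι, Set.InjOn (fun x ↦ I.restrict (f x)) T := by
  have hsep : ∀ᶠ I : Finset ι in Filter.atTop, ∀ p ∈ T ×ˢ T,
      I.restrict (f p.1) = I.restrict (f p.2) → p.1 = p.2 := by
    refine (Filter.eventually_all_finite (hT.prod hT)).2 fun p _ ↦ ?_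
    by_cases hp : p.1 = p.2
    · exact .of_forall fun _ _ ↦ hp
    · obtain ⟨i, hi⟩ := Function.ne_iff.1 (hf.ne hp)
      filter_upwards [Filter.eventually_ge_atTop {i}] with I hI h
      exact absurd (congrFun h ⟨i, Finset.singleton_subset_iff.1 hI⟩) hi
  obtain ⟨I, hI⟩ := hsep.exists
  exact ⟨I, fun x hx y hy ↦ hI (x, y) ⟨hx, hy⟩⟩

lemma encard_eq_iSup_encard_image_restrict {α ι β : Type*} {f : α → ι → β}
    (hf : Function.Injective f) (S : Set α) :
    S.encard = ⨆ I : Finset ι, ((fun x ↦ I.restrict (f x)) '' S).encard := by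
  refine le_antisymm (ENat.forall_natCast_le_iff_le.1 fun n hn ↦ ?_)
    (iSup_le fun I ↦ Set.encard_image_le _ S)
  obtain ⟨T, hTS, hTn⟩ := Set.exists_subset_encard_eq hn
  obtain ⟨I, hI⟩ := exists_finset_injOn_restrict hf (Set.finite_of_encard_eq_coe hTn)
  calc (n : ℕ∞) = ((fun x ↦ I.restrict (f x)) '' T).encard := by rw [hI.encard_image, hTn]
    _ ≤ ((fun x ↦ I.restrict (f x)) '' S).encard := Set.encard_le_encard (Set.image_mono hTS)
    _ ≤ _ := le_iSup (fun I : Finset ι ↦ ((fun x ↦ I.restrict (f x)) '' S).encard) I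

section UniformOn

variable {Ω : Type*} [MeasurableSpace Ω] [MeasurableSingletonClass Ω]

lemma uniformOn_apply_of_finite {s : Set Ω} (hs : s.Finite) (t : Set Ω) :
    uniformOn s t = (s ∩ t).encard / s.encard := by
  rw [uniformOn, cond_apply hs.measurableSet, Measure.count_apply hs.measurableSet,
    Measure.count_apply (hs.inter_of_left t).measurableSet, ENNReal.div_eq_inv_mul]

lemma setLIntegral_uniformOn_finset (F : Finset Ω) {A : Set Ω} (hA : MeasurableSet A)
    (f : Ω → ℝ≥0∞) :
    ∫⁻ x in A, f x ∂uniformOn (F : Set Ω) = (F.card : ℝ≥0∞)⁻¹ * ∑ x ∈ F with x ∈ A, f x := by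
  have hinter : A ∩ F = ↑(F.filter (· ∈ A)) := by
    ext
    simp [and_comm]
  rw [uniformOn, ProbabilityTheory.cond, Measure.restrict_smul, Measure.restrict_restrict hA,
    lintegral_smul_measure, Measure.count_apply_finset, hinter, lintegral_finset]
  simp only [Measure.count_singleton, mul_one, smul_eq_mul]

lemma measure_eq_sum_singleton_of_ae_mem {μ : Measure Ω} {F : Finset Ω} (hF : ∀ᵐ y ∂μ, y ∈ F)
    (A : Set Ω) : μ A = ∑ y ∈ F with y ∈ A, μ {y} := by
  rw [sum_measure_singleton]
  exact measure_congr (Filter.eventuallyEq_set.2 (hF.mono fun y hy ↦ by simp [hy]))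

lemma isReversible_uniformOn_of_symm {κ : Kernel Ω Ω} {F : Finset Ω}
    (hF : ∀ x ∈ F, ∀ᵐ y ∂κ x, y ∈ F) (hsymm : ∀ x ∈ F, ∀ y ∈ F, κ x {y} = κ y {x}) :
    κ.IsReversible (uniformOn (F : Set Ω)) := by
  intro A B hA hB
  have hflow : ∀ C D : Set Ω,
      ∑ x ∈ F with x ∈ C, κ x D = ∑ x ∈ F with x ∈ C, ∑ y ∈ F with y ∈ D, κ x {y} := fun C D ↦
    Finset.sum_congr rfl fun x hx ↦
      measure_eq_sum_singleton_of_ae_mem (hF x (Finset.mem_of_mem_filter x hx)) D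
  rw [setLIntegral_uniformOn_finset F hA, setLIntegral_uniformOn_finset F hB, hflow A B,
    hflow B A, Finset.sum_comm]
  congr 1
  exact Finset.sum_congr rfl fun y hy ↦ Finset.sum_congr rfl fun x hx ↦
    hsymm x (Finset.mem_of_mem_filter x hx) y (Finset.mem_of_mem_filter y hy)

end UniformOn

section Classes

variable {J : Type*} (s : Setoid J)

lemma mem_cls_self (x : J) : x ∈ s.cls x := s.refl' x

lemma mem_cls_comm {x y : J} : y ∈ s.cls x ↔ x ∈ s.cls y := s.comm'

lemma cls_eq_of_mem {x y : J} (h : y ∈ s.cls x) : s.cls y = s.cls x := by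
  ext z
  exact ⟨s.trans' h, s.trans' (s.symm' h)⟩

end Classes

section RerandLaw

variable {J : Type*} [MeasurableSpace J]

/-- The law of the point obtained by re-randomizing the point `x` along the partition `s`: uniform
on the class of `x` when this class is finite, and concentrated at `x` otherwise. -/
noncomputable def rerandLaw (s : Setoid J) (x : J) : Measure J :=
  if (s.cls x).Finite then uniformOn (s.cls x) else Measure.dirac x

lemma rerandLaw_of_finite {s : Setoid J} {x : J} (h : (s.cls x).Finite) :
    rerandLaw s x = uniformOn (s.cls x) := if_pos h

lemma rerandLaw_of_infinite {s : Setoid J} {x : J} (h : (s.cls x).Infinite) :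
    rerandLaw s x = Measure.dirac x := if_neg h

variable [MeasurableSingletonClass J] (s : Setoid J) (x : J)

instance : IsProbabilityMeasure (rerandLaw s x) := by
  unfold rerandLaw
  split_ifs with h
  · exact isProbabilityMeasure_uniformOn h ⟨x, mem_cls_self s x⟩
  · infer_instance

lemma rerandLaw_apply {A : Set J} (hA : MeasurableSet A) :
    rerandLaw s x A = if (s.cls x).Finite then
      ((s.cls x ∩ A).encard / (s.cls x).encard : ℝ≥0∞) else A.indicator 1 x := by
  unfold rerandLaw
  split_ifs with h
  · exact uniformOn_apply_of_finite h A
  · exact Measure.dirac_apply' x hA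

lemma rerandLaw_real_apply {A : Set J} (hA : MeasurableSet A) :
    (rerandLaw s x).real A = if (s.cls x).Finite then
      (Nat.card ↥(s.cls x ∩ A) : ℝ) / Nat.card ↥(s.cls x) else A.indicator 1 x := by
  rw [measureReal_def, rerandLaw_apply s x hA]
  split_ifs with h
  · simp only [Nat.card_coe_set_eq, ← h.cast_ncard_eq, ← (h.inter_of_left A).cast_ncard_eq,
      ENat.toENNReal_coe, ENNReal.toReal_div, ENNReal.toReal_natCast]
  · by_cases hx : x ∈ A <;> simp [hx]

lemma ae_mem_cls_rerandLaw : ∀ᵐ y ∂rerandLaw s x, y ∈ s.cls x := by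
  unfold rerandLaw
  split_ifs with h
  · exact ae_cond_mem h.measurableSet
  · rw [ae_dirac_eq]
    exact mem_cls_self s x

lemma rerandLaw_singleton_comm (y : J) : rerandLaw s x {y} = rerandLaw s y {x} := by
  by_cases hxy : y ∈ s.cls x
  · have hyx : x ∈ s.cls y := (mem_cls_comm s).1 hxy
    have hdirac : ({y} : Set J).indicator (1 : J → ℝ≥0∞) x = ({x} : Set J).indicator 1 y := by
      simp only [Set.indicator_apply, Set.mem_singleton_iff, eq_comm, Pi.one_apply]
    rw [rerandLaw_apply s x (measurableSet_singleton y),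
      rerandLaw_apply s y (measurableSet_singleton x), hdirac,
      Set.inter_singleton_of_mem hxy, Set.inter_singleton_of_mem hyx, Set.encard_singleton,
      Set.encard_singleton, cls_eq_of_mem s hxy]
  · have hnull : ∀ {a b : J}, b ∉ s.cls a → rerandLaw s a {b} = 0 := fun hab ↦
      measure_mono_null (Set.singleton_subset_iff.2 hab) (ae_mem_cls_rerandLaw s _)
    rw [hnull hxy, hnull (mt (mem_cls_comm s).2 hxy)]

end RerandLaw

namespace IsBPartition

variable {J : Type*} [MeasurableSpace J] {s : Setoid J} {A : Set J}

lemma measurable_encard_image_cls_inter (hs : IsBPartition s) {β : Type*} [Finite β]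
    [MeasurableSpace β] [MeasurableSingletonClass β] {g : J → β} (hg : Measurable g)
    (hA : MeasurableSet A) : Measurable fun x ↦ (g '' (s.cls x ∩ A)).encard := by
  have himage : Measurable fun x ↦ g '' (s.cls x ∩ A) := by
    refine measurable_set_iff.2 fun b ↦ measurableSet_setOfPred.1 ?_
    have hsat : {x | b ∈ g '' (s.cls x ∩ A)} = s.sat (A ∩ g ⁻¹' {b}) := by
      ext x
      exact ⟨fun ⟨y, ⟨hy, hyA⟩, hb⟩ ↦ ⟨y, ⟨hyA, hb⟩, hy⟩,
        fun ⟨y, ⟨hyA, hb⟩, hy⟩ ↦ ⟨y, ⟨hy, hyA⟩, hb⟩⟩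
    rw [hsat]
    exact hs _ (hA.inter (hg (measurableSet_singleton b)))
  exact (Measurable.of_discrete (f := Set.encard)).comp himage

variable [MeasurableSpace.CountablySeparated J]

-- Code the points of `J` by binary sequences. The number of points is the supremum over finite sets
-- of coordinates of the number of restricted codes, and each of these codes occurs in the class of
-- `x` exactly when `x` lies in the saturation of a measurable set.
lemma measurable_encard_cls_inter (hs : IsBPartition s) (hA : MeasurableSet A) :
    Measurable fun x ↦ ((s.cls x ∩ A).encard : ℝ≥0∞) := by
  obtain ⟨f, hfm, hf⟩ := MeasurableSpace.measurable_injection_nat_bool_of_countablySeparated J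
  simp_rw [encard_eq_iSup_encard_image_restrict hf, ENat.toENNReal_iSup]
  exact .iSup fun I ↦ Measurable.of_discrete.comp
    (hs.measurable_encard_image_cls_inter ((Finset.measurable_restrict I).comp hfm) hA)

attribute [local instance] MeasurableSpace.measurableSingletonClass_of_countablySeparated

lemma measurable_rerandLaw (hs : IsBPartition s) : Measurable (rerandLaw s) := by
  refine Measure.measurable_of_measurable_coe _ fun A hA ↦ ?_
  simp_rw [rerandLaw_apply s _ hA]
  have hcard : Measurable fun x ↦ ((s.cls x).encard : ℝ≥0∞) := by
    simpa only [Set.inter_univ] using hs.measurable_encard_cls_inter .univ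
  have hfin : MeasurableSet {x | (s.cls x).Finite} := by
    simp_rw [← Set.encard_lt_top_iff, ← ENat.toENNReal_lt_top]
    exact measurableSet_lt hcard measurable_const
  exact .ite hfin ((hs.measurable_encard_cls_inter hA).div hcard) (measurable_one.indicator hA)

/-- Re-randomization along a `B`-partition as a Markov kernel. -/
noncomputable def rerandKernel (hs : IsBPartition s) : Kernel J J where
  toFun := rerandLaw s
  measurable' := hs.measurable_rerandLaw

lemma rerandKernel_apply (hs : IsBPartition s) (x : J) : hs.rerandKernel x = rerandLaw s x := rfl

instance (hs : IsBPartition s) : IsMarkovKernel hs.rerandKernel :=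
  ⟨fun x ↦ inferInstanceAs (IsProbabilityMeasure (rerandLaw s x))⟩

lemma rerandProb_eq_comp_real (hs : IsBPartition s) (π : Measure J) (hA : MeasurableSet A) :
    rerandProb s π A = (hs.rerandKernel ∘ₘ π).real A := by
  rw [measureReal_def, Measure.bind_apply hA hs.rerandKernel.aemeasurable,
    ← integral_toReal (hs.rerandKernel.measurable_coe hA).aemeasurable
      (.of_forall fun x ↦ measure_lt_top _ _)]
  exact integral_congr_ae (.of_forall fun x ↦ (rerandLaw_real_apply s x hA).symm)

lemma hasRerand_iff_invariant (hs : IsBPartition s) (π : Measure J) [IsFiniteMeasure π] :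
    HasRerand s π ↔ hs.rerandKernel.Invariant π := by
  refine ⟨fun h ↦ Measure.ext fun A hA ↦ ?_, fun h A hA ↦ ?_⟩
  · rw [← measureReal_eq_measureReal_iff, ← hs.rerandProb_eq_comp_real π hA]
    exact h A hA
  · rw [hs.rerandProb_eq_comp_real π hA, h.def, measureReal_def]

lemma invariant_uniformOn (hs : IsBPartition s) {F : Set J} (hF : F.Finite)
    (hcls : ∀ x ∈ F, s.cls x ⊆ F) : hs.rerandKernel.Invariant (uniformOn F) := by
  lift F to Finset J using hF
  refine (isReversible_uniformOn_of_symm (fun x hx ↦ ?_)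
    fun x _ y _ ↦ rerandLaw_singleton_comm s x y).invariant
  exact (ae_mem_cls_rerandLaw s x).mono fun y hy ↦ hcls x hx hy

lemma rerandKernel_comp_of_le {P Q : Setoid J} (hP : IsBPartition P) (hQ : IsBPartition Q)
    (hle : Q ≤ P) (hinf : ∀ x, (P.cls x).Infinite → (Q.cls x).Infinite) :
    hQ.rerandKernel ∘ₖ hP.rerandKernel = hP.rerandKernel := by
  ext1 x
  rw [Kernel.comp_apply, rerandKernel_apply]
  by_cases hx : (P.cls x).Finite
  · rw [rerandLaw_of_finite hx]
    refine hQ.invariant_uniformOn hx fun y hy z hz ↦ ?_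
    exact P.trans' hy (hle hz)
  · rw [rerandLaw_of_infinite hx, Measure.dirac_bind hQ.rerandKernel.measurable,
      rerandKernel_apply, rerandLaw_of_infinite (hinf x hx)]

end IsBPartition

theorem hasRerand_of_split_finite_classes_general {J : Type*} [MeasurableSpace J]
    [MeasurableSpace.CountablySeparated J] (π : Measure J) [IsFiniteMeasure π]
    (P Q : Setoid J) (hP : IsBPartition P) (hQ : IsBPartition Q) (hle : Q ≤ P)
    (hinf : ∀ x, (P.cls x).Infinite → (Q.cls x).Infinite) (hre : HasRerand P π) :
    HasRerand Q π := by
  rw [hP.hasRerand_iff_invariant] at hre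
  rw [hQ.hasRerand_iff_invariant]
  calc hQ.rerandKernel ∘ₘ π = hQ.rerandKernel ∘ₘ (hP.rerandKernel ∘ₘ π) := by rw [hre.def]
    _ = (hQ.rerandKernel ∘ₖ hP.rerandKernel) ∘ₘ π := Measure.comp_assoc
    _ = hP.rerandKernel ∘ₘ π := by rw [hP.rerandKernel_comp_of_le hQ hle hinf]
    _ = π := hre.def

/-- Let `P` and `Q` be `B`-partitions of a standard Borel probability
space such that `Q` is obtained from `P` by splitting some of its finite classes (i.e. `Q`
refines `P` and coincides with `P` on infinite classes). If `P` has the re-randomizing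
property, then so does `Q`. -/
theorem hasRerand_of_split_finite_classes {J : Type*} [MeasurableSpace J]
    [StandardBorelSpace J] (π : MeasureTheory.Measure J) [IsProbabilityMeasure π]
    (P Q : Setoid J) (hP : IsBPartition P) (hQ : IsBPartition Q)
    (hle : Q ≤ P)
    (hsplit : ∀ x : J, (P.cls x).Infinite → Q.cls x = P.cls x)
    (hre : HasRerand P π) :
    HasRerand Q π := by
  exact hasRerand_of_split_finite_classes_general π P Q hP hQ hle
    (fun x hx ↦ (hsplit x hx).symm ▸ hx) hre
end

section
/- Let (J,B,π) be a standard Borel probability space and ψ(P) = E_{u∼π}(1/|P_u|) (with 1/|P_u| = 0 for infinite classes). If P, Q, R are B-partitions with the re-randomizing property such that R refines both P and Q, then ψ(R) + ψ(P∨Q) ≥ ψ(P) + ψ(Q). -/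
open MeasureTheory

open scoped Classical

/-- `ψ(P) = E_{u∼π}(1/|P_u|)`, with the convention `1/|P_u| = 0` for infinite classes
(note `Nat.card` of an infinite set is `0`, and `1/0 = 0` in `ℝ`). -/
noncomputable def psi {J : Type*} [MeasurableSpace J] (s : Setoid J)
    (π : MeasureTheory.Measure J) : ℝ :=
  ∫ x, (1 : ℝ) / (Nat.card ↥(s.cls x)) ∂π

/-!
Fix a Borel set `A` and saturate it alternately along `P` and `Q`; the resulting sets increase to
the saturation `X` of `A` along `P ∨ Q`. Let `E` and `O` be the points of `X` which first appear at
an even, respectively odd, stage. These sets are disjoint and unions of classes of `R`, every class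
of `Q` in `X` meets `E`, and every class of `P` in `X` which misses `A` meets `O`. Re-randomizing
along a partition shows that the integral of `1 / |P_u|` over the `P`-saturation of a Borel set `D`
is at most that of `1 / |P_u ∩ D|` over `D`, so
`∫_X (1 / |P_u| + 1 / |Q_u|) ≤ π A + ∫_X 1 / |R_u|`.

If every class of `P ∨ Q` in `X` has at least `m` points, then `m` disjoint Borel sets meet all
these classes, and one may average over `m` choices of `A` to replace `π A` by `π X / m`. It remains
to sum over the possible sizes of the classes of `P ∨ Q`, letting `m → ∞` for the infinite classes.
-/

open scoped ENNReal

section Saturation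

variable {J : Type*} {s r P Q R : Setoid J} {A B : Set J} {x y : J}

/-- A set is saturated for a partition if it is a union of classes. -/
def IsSaturated (s : Setoid J) (A : Set J) : Prop :=
  ∀ ⦃x y⦄, s x y → (x ∈ A ↔ y ∈ A)

lemma isSaturated_iff_le_ker : IsSaturated s A ↔ s ≤ Setoid.ker (· ∈ A) :=
  ⟨fun h _ _ hxy => propext (h hxy), fun h _ _ hxy => iff_of_eq (h hxy)⟩

namespace IsSaturated

lemma of_le (h : IsSaturated s A) (hrs : r ≤ s) : IsSaturated r A :=
  fun _ _ hxy => h (hrs hxy)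

lemma sup (hP : IsSaturated P A) (hQ : IsSaturated Q A) : IsSaturated (P ⊔ Q) A :=
  isSaturated_iff_le_ker.2 (sup_le (isSaturated_iff_le_ker.1 hP) (isSaturated_iff_le_ker.1 hQ))

lemma diff (hA : IsSaturated s A) (hB : IsSaturated s B) : IsSaturated s (A \ B) :=
  fun _ _ hxy => and_congr (hA hxy) (not_congr (hB hxy))

lemma iUnion {ι : Sort*} {A : ι → Set J} (h : ∀ i, IsSaturated s (A i)) :
    IsSaturated s (⋃ i, A i) := fun x y hxy => by
  simp only [Set.mem_iUnion, h _ hxy]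

lemma iInter {ι : Sort*} {A : ι → Set J} (h : ∀ i, IsSaturated s (A i)) :
    IsSaturated s (⋂ i, A i) := fun x y hxy => by
  simp only [Set.mem_iInter, h _ hxy]

lemma disjointed {A : ℕ → Set J} (h : ∀ i, IsSaturated s (A i)) (n : ℕ) :
    IsSaturated s (disjointed A n) :=
  disjointedRec (fun _ i ht => ht.diff (h i)) (h n)

lemma sat_subset (hB : IsSaturated s B) (hAB : A ⊆ B) : s.sat A ⊆ B :=
  fun _ ⟨_, hy, hxy⟩ => (hB hxy).2 (hAB hy)

end IsSaturated

lemma subset_sat (s : Setoid J) (A : Set J) : A ⊆ s.sat A :=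
  fun x hx => ⟨x, hx, s.refl x⟩

lemma isSaturated_sat (s : Setoid J) (A : Set J) : IsSaturated s (s.sat A) :=
  fun _ _ hxy => ⟨fun ⟨z, hz, hxz⟩ => ⟨z, hz, s.trans (s.symm hxy) hxz⟩,
    fun ⟨z, hz, hyz⟩ => ⟨z, hz, s.trans hxy hyz⟩⟩

lemma isSaturated_iUnion_of_frequently {W : ℕ → Set J} (hW : Monotone W)
    (h : ∀ n, ∃ m ≥ n, IsSaturated s (W m)) : IsSaturated s (⋃ n, W n) := by
  have mem_of_rel : ∀ x y, s x y → x ∈ ⋃ n, W n → y ∈ ⋃ n, W n := fun x y hxy hx => by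
    obtain ⟨n, hn⟩ := Set.mem_iUnion.1 hx
    obtain ⟨m, hnm, hm⟩ := h n
    exact Set.mem_iUnion.2 ⟨m, (hm hxy).1 (hW hnm hn)⟩
  exact fun x y hxy => ⟨mem_of_rel x y hxy, mem_of_rel y x (s.symm hxy)⟩

lemma cls_eq_of_rel (h : s x y) : s.cls x = s.cls y :=
  Set.ext fun _ => ⟨fun hz => s.trans (s.symm h) hz, fun hz => s.trans h hz⟩

end Saturation

section AlternatingSaturation

variable {J : Type*} {P Q R : Setoid J} {A : Set J} {x : J}

/-- The sequence of partitions `P, Q, P, Q, …`. -/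
def alternating (P Q : Setoid J) (n : ℕ) : Setoid J :=
  if Even n then P else Q

/-- The result of saturating `A` along the first `n + 1` terms of `P, Q, P, Q, …` in turn. -/
def alternatingSat (P Q : Setoid J) (A : Set J) : ℕ → Set J
  | 0 => P.sat A
  | n + 1 => (alternating P Q (n + 1)).sat (alternatingSat P Q A n)

lemma alternating_of_even {n : ℕ} (hn : Even n) : alternating P Q n = P :=
  if_pos hn

lemma alternating_of_not_even {n : ℕ} (hn : ¬ Even n) : alternating P Q n = Q :=
  if_neg hn

lemma le_alternating (hRP : R ≤ P) (hRQ : R ≤ Q) (n : ℕ) : R ≤ alternating P Q n := by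
  unfold alternating; split_ifs <;> assumption

lemma alternating_le_sup (P Q : Setoid J) (n : ℕ) : alternating P Q n ≤ P ⊔ Q := by
  unfold alternating; split_ifs
  exacts [le_sup_left, le_sup_right]

lemma isSaturated_alternatingSat (P Q : Setoid J) (A : Set J) (n : ℕ) :
    IsSaturated (alternating P Q n) (alternatingSat P Q A n) := by
  cases n with
  | zero => exact isSaturated_sat P A
  | succ n => exact isSaturated_sat _ _

lemma monotone_alternatingSat (P Q : Setoid J) (A : Set J) : Monotone (alternatingSat P Q A) :=
  monotone_nat_of_le_succ fun _ => subset_sat _ _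

lemma iUnion_alternatingSat (P Q : Setoid J) (A : Set J) :
    ⋃ n, alternatingSat P Q A n = (P ⊔ Q).sat A := by
  refine Set.Subset.antisymm (Set.iUnion_subset fun n => ?_) (IsSaturated.sat_subset ?_ ?_)
  · induction n with
    | zero => exact ((isSaturated_sat (P ⊔ Q) A).of_le le_sup_left).sat_subset (subset_sat _ A)
    | succ n ih =>
      exact ((isSaturated_sat (P ⊔ Q) A).of_le (alternating_le_sup P Q _)).sat_subset ih
  · have hW := monotone_alternatingSat P Q A
    refine (isSaturated_iUnion_of_frequently hW fun n => ⟨2 * n, by lia, ?_⟩).sup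
      (isSaturated_iUnion_of_frequently hW fun n => ⟨2 * n + 1, by lia, ?_⟩)
    · simpa [alternating] using isSaturated_alternatingSat P Q A (2 * n)
    · simpa [alternating] using isSaturated_alternatingSat P Q A (2 * n + 1)
  · exact (subset_sat P A).trans (Set.subset_iUnion (alternatingSat P Q A) 0)

/-- The points of `(P ⊔ Q).sat A` which first appear in `alternatingSat P Q A` at a stage satisfying
`p`; used with `p` being `Even` or its negation. -/
def alternatingLayers (P Q : Setoid J) (A : Set J) (p : ℕ → Prop) : Set J :=
  ⋃ (n : ℕ) (_ : p n), disjointed (alternatingSat P Q A) n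

lemma mem_alternatingLayers {p : ℕ → Prop} :
    x ∈ alternatingLayers P Q A p ↔ ∃ n, p n ∧ x ∈ disjointed (alternatingSat P Q A) n := by
  simp [alternatingLayers]

lemma iUnion_disjointed_alternatingSat (P Q : Setoid J) (A : Set J) :
    ⋃ n, disjointed (alternatingSat P Q A) n = (P ⊔ Q).sat A := by
  rw [iUnion_disjointed, iUnion_alternatingSat]

lemma isSaturated_alternatingLayers (hRP : R ≤ P) (hRQ : R ≤ Q) (A : Set J) (p : ℕ → Prop) :
    IsSaturated R (alternatingLayers P Q A p) :=
  .iUnion fun n => .iUnion fun _ => .disjointed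
    (fun i => (isSaturated_alternatingSat P Q A i).of_le (le_alternating hRP hRQ i)) n

lemma disjoint_alternatingLayers_not (P Q : Setoid J) (A : Set J) (p : ℕ → Prop) :
    Disjoint (alternatingLayers P Q A p) (alternatingLayers P Q A (¬ p ·)) := by
  refine Set.disjoint_left.2 fun x hx hx' => ?_
  obtain ⟨m, hm, hxm⟩ := mem_alternatingLayers.1 hx
  obtain ⟨n, hn, hxn⟩ := mem_alternatingLayers.1 hx'
  have hmn : m ≠ n := fun h => hn (h ▸ hm)
  exact Set.disjoint_left.1 (disjoint_disjointed _ hmn) hxm hxn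

lemma alternatingLayers_union_not (P Q : Setoid J) (A : Set J) (p : ℕ → Prop) :
    alternatingLayers P Q A p ∪ alternatingLayers P Q A (¬ p ·) = (P ⊔ Q).sat A := by
  rw [← iUnion_disjointed_alternatingSat]
  ext x
  simp only [Set.mem_union, mem_alternatingLayers, Set.mem_iUnion, ← exists_or, ← or_and_right,
    em, true_and]

/-- A point which appears at stage `n + 1` is related to a point of an earlier stage `i`. If `i` and
`n + 1` had the same parity, stage `i` would be saturated for the same partition as stage `n + 1`,
and the given point would have appeared by then. -/
lemma mem_sat_disjointed_of_mem_disjointed_succ {n : ℕ}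
    (hx : x ∈ disjointed (alternatingSat P Q A) (n + 1)) :
    ∃ i, ¬ (Even i ↔ Even (n + 1)) ∧
      x ∈ (alternating P Q (n + 1)).sat (disjointed (alternatingSat P Q A) i) := by
  have hx_not : x ∉ alternatingSat P Q A n := by
    rw [(monotone_alternatingSat P Q A).disjointed_add_one] at hx
    exact hx.2
  obtain ⟨y, hy, hxy⟩ := disjointed_subset _ _ hx
  obtain ⟨i, hin, hyi⟩ : ∃ i ≤ n, y ∈ disjointed (alternatingSat P Q A) i := by
    rw [← (monotone_alternatingSat P Q A).partialSups_eq, ← biUnion_Iic_disjointed] at hy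
    simpa using hy
  refine ⟨i, fun hparity => hx_not (monotone_alternatingSat P Q A hin ?_), y, hyi, hxy⟩
  have hsat : IsSaturated (alternating P Q (n + 1)) (alternatingSat P Q A i) := by
    simpa only [alternating, hparity] using isSaturated_alternatingSat P Q A i
  exact (hsat hxy).2 (disjointed_subset _ _ hyi)

lemma sat_sup_subset_sat_even (P Q : Setoid J) (A : Set J) :
    (P ⊔ Q).sat A ⊆ Q.sat (alternatingLayers P Q A Even) := by
  rw [← alternatingLayers_union_not P Q A Even]
  refine Set.union_subset (subset_sat _ _) fun x hx => ?_
  obtain ⟨n, hn, hxn⟩ := mem_alternatingLayers.1 hx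
  cases n with
  | zero => exact absurd Even.zero hn
  | succ n =>
    obtain ⟨i, hi, y, hy, hxy⟩ := mem_sat_disjointed_of_mem_disjointed_succ hxn
    rw [alternating_of_not_even hn] at hxy
    exact ⟨y, mem_alternatingLayers.2 ⟨i, by tauto, hy⟩, hxy⟩

lemma sat_sup_subset_sat_union_sat_odd (P Q : Setoid J) (A : Set J) :
    (P ⊔ Q).sat A ⊆ P.sat A ∪ P.sat (alternatingLayers P Q A (¬ Even ·)) := by
  rw [← alternatingLayers_union_not P Q A Even]
  refine Set.union_subset (fun x hx => ?_) ((subset_sat P _).trans Set.subset_union_right)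
  obtain ⟨n, hn, hxn⟩ := mem_alternatingLayers.1 hx
  cases n with
  | zero => exact .inl (disjointed_subset (alternatingSat P Q A) 0 hxn)
  | succ n =>
    obtain ⟨i, hi, y, hy, hxy⟩ := mem_sat_disjointed_of_mem_disjointed_succ hxn
    rw [alternating_of_even hn] at hxy
    exact .inr ⟨y, mem_alternatingLayers.2 ⟨i, by tauto, hy⟩, hxy⟩

variable [MeasurableSpace J]

lemma measurableSet_alternatingSat (hP : IsBPartition P) (hQ : IsBPartition Q)
    (hA : MeasurableSet A) (n : ℕ) : MeasurableSet (alternatingSat P Q A n) := by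
  induction n with
  | zero => exact hP A hA
  | succ n ih =>
    unfold alternatingSat alternating
    split_ifs
    exacts [hP _ ih, hQ _ ih]

lemma measurableSet_alternatingLayers (hP : IsBPartition P) (hQ : IsBPartition Q)
    (hA : MeasurableSet A) (p : ℕ → Prop) : MeasurableSet (alternatingLayers P Q A p) :=
  .iUnion fun n => .iUnion fun _ => .disjointed (measurableSet_alternatingSat hP hQ hA) n

lemma IsBPartition.sup (hP : IsBPartition P) (hQ : IsBPartition Q) : IsBPartition (P ⊔ Q) :=
  fun A hA => by
    rw [← iUnion_alternatingSat]
    exact .iUnion (measurableSet_alternatingSat hP hQ hA)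

end AlternatingSaturation

section ClassSize

variable {J : Type*} {s : Setoid J} {A B : Set J} {x y : J}

/-- The number of points of `A` in the class of `x`. -/
noncomputable def clsCount (s : Setoid J) (A : Set J) (x : J) : ℕ∞ :=
  (s.cls x ∩ A).encard

/-- The reciprocal of the size of the class of `x`, which is `0` if the class is infinite; it is the
integrand of `psi` with values in `ℝ≥0∞`. -/
noncomputable def clsWeight (s : Setoid J) (x : J) : ℝ≥0∞ :=
  (clsCount s Set.univ x : ℝ≥0∞)⁻¹

lemma clsCount_mono (h : A ⊆ B) (x : J) : clsCount s A x ≤ clsCount s B x :=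
  Set.encard_le_encard (Set.inter_subset_inter_right _ h)

lemma clsCount_eq_of_rel (h : s x y) (A : Set J) : clsCount s A x = clsCount s A y := by
  rw [clsCount, cls_eq_of_rel h, clsCount]

lemma isSaturated_preimage_clsCount (s : Setoid J) (A : Set J) (T : Set ℕ∞) :
    IsSaturated s (clsCount s A ⁻¹' T) := fun _ _ hxy => by
  rw [Set.mem_preimage, clsCount_eq_of_rel hxy, Set.mem_preimage]

lemma clsCount_inter_of_mem (hB : IsSaturated s B) (hx : x ∈ B) :
    clsCount s (A ∩ B) x = clsCount s A x := by
  have hcls : s.cls x ⊆ B := fun y hxy => (hB hxy).1 hx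
  rw [clsCount, ← Set.inter_assoc, Set.inter_eq_left.2 (Set.inter_subset_left.trans hcls), clsCount]

lemma one_le_clsCount_iff : 1 ≤ clsCount s A x ↔ x ∈ s.sat A := by
  rw [clsCount, Set.one_le_encard_iff_nonempty]
  exact ⟨fun ⟨y, hxy, hy⟩ => ⟨y, hy, hxy⟩, fun ⟨y, hy, hxy⟩ => ⟨y, hxy, hy⟩⟩

lemma one_le_clsCount (hx : x ∈ A) : 1 ≤ clsCount s A x :=
  one_le_clsCount_iff.2 (subset_sat s A hx)

lemma clsWeight_le_one (s : Setoid J) (x : J) : clsWeight s x ≤ 1 := by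
  rw [clsWeight, ENNReal.inv_le_one]
  exact_mod_cast one_le_clsCount (Set.mem_univ x)

lemma clsCount_mul_clsWeight_le_one (s : Setoid J) (A : Set J) (x : J) :
    (clsCount s A x : ℝ≥0∞) * clsWeight s x ≤ 1 := by
  rw [clsWeight, ← div_eq_mul_inv]
  refine ENNReal.div_le_of_le_mul ?_
  rw [one_mul]
  exact_mod_cast clsCount_mono (Set.subset_univ A) x

lemma clsWeight_le_inv_mul (hx : x ∈ s.sat A) :
    clsWeight s x ≤ (clsCount s A x : ℝ≥0∞)⁻¹ * (clsCount s A x * clsWeight s x) := by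
  by_cases htop : clsCount s Set.univ x = ⊤
  · simp [clsWeight, htop]
  · have h0 : (clsCount s A x : ℝ≥0∞) ≠ 0 := by
      exact_mod_cast (zero_lt_one.trans_le (one_le_clsCount_iff.2 hx)).ne'
    have hfin : (clsCount s A x : ℝ≥0∞) ≠ ⊤ := by
      exact_mod_cast ne_top_of_le_ne_top htop (clsCount_mono (Set.subset_univ A) x)
    rw [← mul_assoc, ENNReal.inv_mul_cancel h0 hfin, one_mul]

lemma toReal_clsCount (s : Setoid J) (A : Set J) (x : J) :
    (clsCount s A x : ℝ≥0∞).toReal = Nat.card ↥(s.cls x ∩ A) := by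
  rw [clsCount, Nat.card_coe_set_eq, Set.ncard]
  cases (s.cls x ∩ A).encard <;> simp

lemma toReal_clsWeight (s : Setoid J) (x : J) :
    (clsWeight s x).toReal = 1 / (Nat.card ↥(s.cls x) : ℝ) := by
  rw [clsWeight, ENNReal.toReal_inv, toReal_clsCount, Set.inter_univ, one_div]

lemma finite_cls_iff : (s.cls x).Finite ↔ clsCount s Set.univ x ≠ ⊤ := by
  rw [clsCount, Set.inter_univ, Set.encard_ne_top_iff]

lemma natCast_le_encard_iff_exists_injective {α : Type*} {S : Set α} {n : ℕ} :
    (n : ℕ∞) ≤ S.encard ↔ ∃ x : Fin n → α, Function.Injective x ∧ ∀ k, x k ∈ S := by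
  constructor
  · intro h
    obtain ⟨T, hTS, hTn⟩ := Set.exists_subset_encard_eq h
    have hT : T.Finite := Set.finite_of_encard_eq_coe hTn
    lift T to Finset α using hT
    have hcard : T.card = n := by simpa using hTn
    let e : Fin n ≃ T := (T.equivFinOfCardEq hcard).symm
    exact ⟨fun k => e k, Subtype.val_injective.comp e.injective, fun k => hTS (e k).2⟩
  · rintro ⟨x, hx, hxS⟩
    calc (n : ℕ∞) = (Set.range x).encard := by simp [← Set.image_univ, hx.encard_image]
      _ ≤ S.encard := Set.encard_le_encard (Set.range_subset_iff.2 hxS)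

end ClassSize

section Labelings

open MeasurableSpace

/-- Label a point through an arbitrary function of its first `N` binary digits under a measurable
injection into `ℕ → Bool`; there are countably many such labelings. -/
lemma exists_countable_labelings (J : Type*) [MeasurableSpace J] [CountablySeparated J] :
    ∃ h : ℕ → J → ℕ, (∀ i, Measurable (h i)) ∧
      ∀ (n : ℕ) (x : Fin n → J), Function.Injective x → ∃ i, ∀ k, h i (x k) = k := by
  obtain ⟨f, hf, hf_inj⟩ := measurable_injection_nat_bool_of_countablySeparated J
  let digits (N : ℕ) (v : J) (i : Fin N) : Bool := f v i
  let label (c : Σ N, (Fin N → Bool) → ℕ) (v : J) : ℕ := c.2 (digits c.1 v)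
  have : Nonempty (Σ N, (Fin N → Bool) → ℕ) := ⟨⟨0, 0⟩⟩
  obtain ⟨code, hcode⟩ := exists_surjective_nat (Σ N, (Fin N → Bool) → ℕ)
  refine ⟨fun i => label (code i), fun i => ?_, fun n x hx => ?_⟩
  · exact (Measurable.of_discrete (f := (code i).2)).comp
      (measurable_pi_lambda _ fun j => (measurable_pi_apply _).comp hf)
  · have separated (a b : Fin n) : ∀ᶠ N in Filter.atTop,
        digits N (x a) = digits N (x b) → a = b := by
      by_cases hab : a = b
      · exact .of_forall fun _ _ => hab
      · obtain ⟨m, hm⟩ := Function.ne_iff.1 fun h => hab (hx (hf_inj h))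
        filter_upwards [Filter.eventually_gt_atTop m] with N hN h
        exact absurd (congrFun h ⟨m, hN⟩) hm
    obtain ⟨N, hN⟩ :=
      (Filter.eventually_all.2 fun a => Filter.eventually_all.2 (separated a)).exists
    have hinj : Function.Injective fun k => digits N (x k) := fun a b => hN a b
    obtain ⟨i, hi⟩ := hcode ⟨N, Function.extend (fun k => digits N (x k)) Fin.val 0⟩
    exact ⟨i, fun k => by simp only [label, hi]; exact hinj.extend_apply _ _ k⟩

variable {J : Type*} {s : Setoid J} {A : Set J} {x : J}

lemma natCast_le_clsCount_of_labeling {h : J → ℕ} {n : ℕ}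
    (hx : ∀ k : Fin n, x ∈ s.sat (A ∩ h ⁻¹' {(k : ℕ)})) : (n : ℕ∞) ≤ clsCount s A x := by
  choose y hy hxy using hx
  refine natCast_le_encard_iff_exists_injective.2 ⟨y, fun a b hab => Fin.ext ?_,
    fun k => ⟨hxy k, (hy k).1⟩⟩
  rw [← (hy a).2, ← (hy b).2, hab]

lemma exists_labeling_of_natCast_le_clsCount {h : ℕ → J → ℕ} {n : ℕ}
    (hsep : ∀ y : Fin n → J, Function.Injective y → ∃ i, ∀ k, h i (y k) = k)
    (hx : (n : ℕ∞) ≤ clsCount s A x) : ∃ i, ∀ k : Fin n, x ∈ s.sat (A ∩ h i ⁻¹' {(k : ℕ)}) := by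
  obtain ⟨y, hy, hyA⟩ := natCast_le_encard_iff_exists_injective.1 hx
  obtain ⟨i, hi⟩ := hsep y hy
  exact ⟨i, fun k => ⟨y k, ⟨(hyA k).2, hi k⟩, (hyA k).1⟩⟩

variable [MeasurableSpace J] [CountablySeparated J]

namespace IsBPartition

lemma measurableSet_natCast_le_clsCount (hs : IsBPartition s) (hA : MeasurableSet A) (n : ℕ) :
    MeasurableSet {x | (n : ℕ∞) ≤ clsCount s A x} := by
  obtain ⟨h, hmeas, hsep⟩ := exists_countable_labelings J
  have hcount : {x | (n : ℕ∞) ≤ clsCount s A x} =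
      ⋃ i, ⋂ k : Fin n, s.sat (A ∩ h i ⁻¹' {(k : ℕ)}) := by
    ext x
    simp only [Set.mem_ofPred_eq, Set.mem_iUnion, Set.mem_iInter]
    exact ⟨exists_labeling_of_natCast_le_clsCount (hsep n),
      fun ⟨i, hi⟩ => natCast_le_clsCount_of_labeling hi⟩
  rw [hcount]
  exact .iUnion fun i => .iInter fun k => hs _ (hA.inter (hmeas i (measurableSet_singleton _)))

lemma measurable_clsCount (hs : IsBPartition s) (hA : MeasurableSet A) :
    Measurable (clsCount s A) := by
  refine ENat.measurable_iff.2 fun n => ?_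
  have hfiber : clsCount s A ⁻¹' {(n : ℕ∞)} =
      {x | (n : ℕ∞) ≤ clsCount s A x} \ {x | ((n + 1 : ℕ) : ℕ∞) ≤ clsCount s A x} := by
    ext x
    have hsucc : ((n + 1 : ℕ) : ℕ∞) ≤ clsCount s A x ↔ (n : ℕ∞) < clsCount s A x := by
      rw [Nat.cast_add_one, ENat.add_one_le_iff (ENat.natCast_ne_top n)]
    simp only [Set.mem_preimage, Set.mem_singleton_iff, Set.mem_sdiff, Set.mem_ofPred_eq, hsucc,
      not_lt]
    exact eq_comm.trans le_antisymm_iff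
  rw [hfiber]
  exact (hs.measurableSet_natCast_le_clsCount hA n).diff
    (hs.measurableSet_natCast_le_clsCount hA (n + 1))

lemma measurable_clsWeight (hs : IsBPartition s) : Measurable (clsWeight s) :=
  (Measurable.of_discrete.comp (hs.measurable_clsCount .univ)).inv

lemma measurable_clsCount_mul_clsWeight (hs : IsBPartition s) (hA : MeasurableSet A) :
    Measurable fun x => (clsCount s A x : ℝ≥0∞) * clsWeight s x :=
  (Measurable.of_discrete.comp (hs.measurable_clsCount hA)).mul hs.measurable_clsWeight

/-- Use on each class the first of countably many labelings which takes all the values `k < n`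
there. -/
lemma exists_labeling (hs : IsBPartition s) (n : ℕ) : ∃ l : J → ℕ, Measurable l ∧
    ∀ x, (n : ℕ∞) ≤ clsCount s Set.univ x → ∀ k : Fin n, x ∈ s.sat (l ⁻¹' {(k : ℕ)}) := by
  obtain ⟨h, hmeas, hsep⟩ := exists_countable_labelings J
  let Y (i : ℕ) : Set J := ⋂ k : Fin n, s.sat (h i ⁻¹' {(k : ℕ)})
  have hY_meas (i : ℕ) : MeasurableSet (Y i) :=
    .iInter fun k => hs _ (hmeas i (measurableSet_singleton _))
  have hY_sat (i : ℕ) : IsSaturated s (Y i) := .iInter fun k => isSaturated_sat _ _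
  obtain ⟨l, hl, hl_eq⟩ := exists_measurable_piecewise (disjointed Y) (.disjointed hY_meas) h hmeas
    fun i j hij x hx => (Set.disjoint_left.1 (disjoint_disjointed Y hij) hx.1 hx.2).elim
  refine ⟨l, hl, fun x hx k => ?_⟩
  have hxY : x ∈ ⋃ i, Y i := by
    obtain ⟨i, hi⟩ := exists_labeling_of_natCast_le_clsCount (hsep n) hx
    exact Set.mem_iUnion.2 ⟨i, Set.mem_iInter.2 fun k => by simpa using hi k⟩
  rw [← iUnion_disjointed] at hxY
  obtain ⟨i, hxi⟩ := Set.mem_iUnion.1 hxY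
  obtain ⟨y, hy, hxy⟩ := Set.mem_iInter.1 (disjointed_subset Y i hxi) k
  exact ⟨y, (hl_eq i ((IsSaturated.disjointed hY_sat i hxy).1 hxi)).trans hy, hxy⟩

end IsBPartition

end Labelings

lemma lintegral_eq_tsum_setLIntegral_preimage_singleton {α ι : Type*} [MeasurableSpace α]
    [MeasurableSpace ι] [Countable ι] [MeasurableSingletonClass ι] {g : α → ι} (hg : Measurable g)
    (μ : Measure α) (f : α → ℝ≥0∞) : ∫⁻ x, f x ∂μ = ∑' i, ∫⁻ x in g ⁻¹' {i}, f x ∂μ := by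
  rw [← lintegral_iUnion (fun i => hg (measurableSet_singleton i)) (pairwise_disjoint_fiber g),
    ← Set.preimage_iUnion, Set.iUnion_of_singleton, Set.preimage_univ, setLIntegral_univ]

section Transport

open MeasurableSpace

variable {J : Type*} [MeasurableSpace J] {s r P Q R : Setoid J} {π : Measure J} {A D X : Set J}

lemma lintegral_clsWeight_ne_top (s : Setoid J) (π : Measure J) [IsFiniteMeasure π] :
    ∫⁻ x, clsWeight s x ∂π ≠ ⊤ :=
  ne_top_of_le_ne_top (by simp [measure_ne_top]) (lintegral_mono (clsWeight_le_one s))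

variable [CountablySeparated J]

lemma IsBPartition.psi_eq_toReal_lintegral (hs : IsBPartition s) (π : Measure J) :
    psi s π = (∫⁻ x, clsWeight s x ∂π).toReal := by
  rw [psi, ← integral_toReal hs.measurable_clsWeight.aemeasurable
    (.of_forall fun x => (clsWeight_le_one s x).trans_lt ENNReal.one_lt_top)]
  simp only [toReal_clsWeight]

namespace HasRerand

variable [IsFiniteMeasure π]

lemma lintegral_clsCount_mul_clsWeight (hre : HasRerand s π) (hs : IsBPartition s)
    (hA : MeasurableSet A) : ∫⁻ x, (clsCount s A x : ℝ≥0∞) * clsWeight s x ∂π =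
      π (A ∩ clsCount s Set.univ ⁻¹' {⊤}ᶜ) := by
  set F := clsCount s Set.univ ⁻¹' {⊤}ᶜ
  have hF : MeasurableSet F := hs.measurable_clsCount .univ .of_discrete
  have htop : ∫⁻ x, (clsCount s A x : ℝ≥0∞) * clsWeight s x ∂π ≠ ⊤ :=
    ne_top_of_le_ne_top (by simp [measure_ne_top])
      (lintegral_mono (clsCount_mul_clsWeight_le_one s A))
  rw [← ENNReal.toReal_eq_toReal_iff' htop (measure_ne_top π _), ← hre _ (hA.inter hF), rerandProb,
    ← integral_toReal (hs.measurable_clsCount_mul_clsWeight hA).aemeasurable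
      (.of_forall fun x => (clsCount_mul_clsWeight_le_one s A x).trans_lt ENNReal.one_lt_top)]
  congr 1 with x
  split_ifs with hfin
  · have hxF : x ∈ F := finite_cls_iff.1 hfin
    rw [← clsCount_inter_of_mem (isSaturated_preimage_clsCount s _ _) hxF, ENNReal.toReal_mul,
      toReal_clsCount, toReal_clsWeight, mul_one_div]
  · have hinf : clsCount s Set.univ x = ⊤ := not_not.1 fun h => hfin (finite_cls_iff.2 h)
    simp [clsWeight, F, hinf]

/-- By invariance of `φ` it suffices to compare the push-forwards under `φ` of the two measures. -/
lemma lintegral_mul_clsCount_mul_clsWeight_le (hre : HasRerand s π) (hs : IsBPartition s)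
    (hD : MeasurableSet D) {φ : J → ℝ≥0∞} (hφ : Measurable φ) (hinv : ∀ x y, s x y → φ x = φ y) :
    ∫⁻ x, φ x * (clsCount s D x * clsWeight s x) ∂π ≤ ∫⁻ x in D, φ x ∂π := by
  set m : J → ℝ≥0∞ := fun x => clsCount s D x * clsWeight s x
  have hm : Measurable m := hs.measurable_clsCount_mul_clsWeight hD
  have hmap : (π.withDensity m).map φ ≤ (π.restrict D).map φ := Measure.le_iff.2 fun T hT => by
    have hsat : IsSaturated s (φ ⁻¹' T) := fun x y hxy => by
      rw [Set.mem_preimage, hinv x y hxy, Set.mem_preimage]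
    rw [Measure.map_apply hφ hT, Measure.map_apply hφ hT, withDensity_apply _ (hφ hT),
      Measure.restrict_apply (hφ hT), Set.inter_comm]
    calc ∫⁻ x in φ ⁻¹' T, m x ∂π
        = ∫⁻ x in φ ⁻¹' T, (clsCount s (D ∩ φ ⁻¹' T) x : ℝ≥0∞) * clsWeight s x ∂π :=
          setLIntegral_congr_fun (hφ hT) fun x hx => by
            simp only [m, clsCount_inter_of_mem hsat hx]
      _ ≤ ∫⁻ x, (clsCount s (D ∩ φ ⁻¹' T) x : ℝ≥0∞) * clsWeight s x ∂π :=
          setLIntegral_le_lintegral _ _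
      _ ≤ π (D ∩ φ ⁻¹' T) := by
          rw [hre.lintegral_clsCount_mul_clsWeight hs (hD.inter (hφ hT))]
          exact measure_mono Set.inter_subset_left
  calc ∫⁻ x, φ x * m x ∂π = ∫⁻ t, t ∂(π.withDensity m).map φ := by
        rw [lintegral_map (f := fun t => t) measurable_id hφ,
          lintegral_withDensity_eq_lintegral_mul _ hm hφ]
        simp only [Pi.mul_apply, mul_comm]
    _ ≤ ∫⁻ t, t ∂(π.restrict D).map φ := lintegral_mono' hmap le_rfl
    _ = ∫⁻ x in D, φ x ∂π :=
        lintegral_map (f := fun t => t) measurable_id hφ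

lemma setLIntegral_sat_clsWeight_le (hre : HasRerand s π) (hs : IsBPartition s)
    (hD : MeasurableSet D) :
    ∫⁻ x in s.sat D, clsWeight s x ∂π ≤ ∫⁻ x in D, (clsCount s D x : ℝ≥0∞)⁻¹ ∂π :=
  calc ∫⁻ x in s.sat D, clsWeight s x ∂π
      ≤ ∫⁻ x in s.sat D, (clsCount s D x : ℝ≥0∞)⁻¹ * (clsCount s D x * clsWeight s x) ∂π :=
        setLIntegral_mono' (hs D hD) fun _ hx => clsWeight_le_inv_mul hx
    _ ≤ ∫⁻ x, (clsCount s D x : ℝ≥0∞)⁻¹ * (clsCount s D x * clsWeight s x) ∂π :=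
        setLIntegral_le_lintegral _ _
    _ ≤ ∫⁻ x in D, (clsCount s D x : ℝ≥0∞)⁻¹ ∂π :=
        hre.lintegral_mul_clsCount_mul_clsWeight_le hs hD
          (Measurable.of_discrete.comp (hs.measurable_clsCount hD)).inv
          fun _ _ hxy => by rw [clsCount_eq_of_rel hxy]

lemma setLIntegral_sat_clsWeight_le_measure (hre : HasRerand s π) (hs : IsBPartition s)
    (hA : MeasurableSet A) : ∫⁻ x in s.sat A, clsWeight s x ∂π ≤ π A := by
  refine (hre.setLIntegral_sat_clsWeight_le hs hA).trans ?_
  rw [← setLIntegral_one]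
  refine setLIntegral_mono' hA fun x hx => ENNReal.inv_le_one.2 ?_
  exact_mod_cast one_le_clsCount hx

lemma setLIntegral_sat_clsWeight_le_of_isSaturated (hre : HasRerand s π) (hs : IsBPartition s)
    (hrs : r ≤ s) (hD : MeasurableSet D) (hrD : IsSaturated r D) :
    ∫⁻ x in s.sat D, clsWeight s x ∂π ≤ ∫⁻ x in D, clsWeight r x ∂π := by
  refine (hre.setLIntegral_sat_clsWeight_le hs hD).trans
    (setLIntegral_mono' hD fun x hx => ENNReal.inv_le_inv.2 ?_)
  have hcls : clsCount r Set.univ x ≤ clsCount s D x :=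
    Set.encard_le_encard fun y hy => ⟨hrs hy.1, (hrD hy.1).1 hx⟩
  exact_mod_cast hcls

end HasRerand

variable [IsFiniteMeasure π]

lemma setLIntegral_sat_sup_clsWeight_add_le (hP : IsBPartition P) (hQ : IsBPartition Q)
    (hreP : HasRerand P π) (hreQ : HasRerand Q π) (hRP : R ≤ P) (hRQ : R ≤ Q)
    (hA : MeasurableSet A) :
    ∫⁻ x in (P ⊔ Q).sat A, clsWeight P x ∂π + ∫⁻ x in (P ⊔ Q).sat A, clsWeight Q x ∂π ≤
      ∫⁻ x in (P ⊔ Q).sat A, clsWeight R x ∂π + π A := by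
  set E := alternatingLayers P Q A Even
  set O := alternatingLayers P Q A (¬ Even ·)
  have hE : MeasurableSet E := measurableSet_alternatingLayers hP hQ hA _
  have hO : MeasurableSet O := measurableSet_alternatingLayers hP hQ hA _
  have hRE : IsSaturated R E := isSaturated_alternatingLayers hRP hRQ A _
  have hRO : IsSaturated R O := isSaturated_alternatingLayers hRP hRQ A _
  calc ∫⁻ x in (P ⊔ Q).sat A, clsWeight P x ∂π + ∫⁻ x in (P ⊔ Q).sat A, clsWeight Q x ∂π
      ≤ (∫⁻ x in P.sat A, clsWeight P x ∂π + ∫⁻ x in P.sat O, clsWeight P x ∂π) +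
          ∫⁻ x in Q.sat E, clsWeight Q x ∂π :=
        add_le_add ((lintegral_mono_set (sat_sup_subset_sat_union_sat_odd P Q A)).trans
          (lintegral_union_le _ _ _)) (lintegral_mono_set (sat_sup_subset_sat_even P Q A))
    _ ≤ (π A + ∫⁻ x in O, clsWeight R x ∂π) + ∫⁻ x in E, clsWeight R x ∂π :=
        add_le_add (add_le_add (hreP.setLIntegral_sat_clsWeight_le_measure hP hA)
          (hreP.setLIntegral_sat_clsWeight_le_of_isSaturated hP hRP hO hRO))
          (hreQ.setLIntegral_sat_clsWeight_le_of_isSaturated hQ hRQ hE hRE)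
    _ = ∫⁻ x in E ∪ O, clsWeight R x ∂π + π A := by
        rw [lintegral_union hO (disjoint_alternatingLayers_not P Q A Even)]
        ring
    _ = ∫⁻ x in (P ⊔ Q).sat A, clsWeight R x ∂π + π A := by
        rw [alternatingLayers_union_not]

lemma setLIntegral_clsWeight_add_le_of_le_clsCount (hP : IsBPartition P) (hQ : IsBPartition Q)
    (hreP : HasRerand P π) (hreQ : HasRerand Q π) (hRP : R ≤ P) (hRQ : R ≤ Q)
    (hX : MeasurableSet X) (hX_sat : IsSaturated (P ⊔ Q) X) {m : ℕ} (hm : m ≠ 0)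
    (hX_le : ∀ x ∈ X, (m : ℕ∞) ≤ clsCount (P ⊔ Q) Set.univ x) :
    ∫⁻ x in X, clsWeight P x ∂π + ∫⁻ x in X, clsWeight Q x ∂π ≤
      ∫⁻ x in X, clsWeight R x ∂π + π X / m := by
  obtain ⟨l, hl, hl_sat⟩ := (hP.sup hQ).exists_labeling m
  let A (k : Fin m) : Set J := X ∩ l ⁻¹' {(k : ℕ)}
  have hA_meas (k : Fin m) : MeasurableSet (A k) := hX.inter (hl (measurableSet_singleton _))
  have hA_disj : Pairwise (Function.onFun Disjoint A) := fun i j hij =>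
    Set.disjoint_left.2 fun x hi hj => hij (Fin.ext (hi.2.symm.trans hj.2))
  have hA_sat (k : Fin m) : (P ⊔ Q).sat (A k) = X := by
    refine Set.Subset.antisymm (hX_sat.sat_subset Set.inter_subset_left) fun x hx => ?_
    obtain ⟨y, hy, hxy⟩ := hl_sat x (hX_le x hx) k
    exact ⟨y, ⟨(hX_sat hxy).1 hx, hy⟩, hxy⟩
  have hA_sum : ∑ k, π (A k) ≤ π X :=
    calc ∑ k, π (A k) = π (⋃ k, A k) := by rw [measure_iUnion hA_disj hA_meas, tsum_fintype]
      _ ≤ π X := measure_mono (Set.iUnion_subset fun k => Set.inter_subset_left)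
  have hm0 : (m : ℝ≥0∞) ≠ 0 := Nat.cast_ne_zero.2 hm
  have hm_top : (m : ℝ≥0∞) ≠ ⊤ := ENNReal.natCast_ne_top m
  rw [← ENNReal.mul_le_mul_iff_right hm0 hm_top]
  calc (m : ℝ≥0∞) * (∫⁻ x in X, clsWeight P x ∂π + ∫⁻ x in X, clsWeight Q x ∂π)
      = ∑ _k : Fin m, (∫⁻ x in X, clsWeight P x ∂π + ∫⁻ x in X, clsWeight Q x ∂π) := by
        simp [mul_add]
    _ ≤ ∑ k : Fin m, (∫⁻ x in X, clsWeight R x ∂π + π (A k)) :=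
        Finset.sum_le_sum fun k _ => by
          simpa only [hA_sat] using
            setLIntegral_sat_sup_clsWeight_add_le hP hQ hreP hreQ hRP hRQ (hA_meas k)
    _ = m * ∫⁻ x in X, clsWeight R x ∂π + ∑ k, π (A k) := by simp [Finset.sum_add_distrib]
    _ ≤ m * ∫⁻ x in X, clsWeight R x ∂π + π X := by gcongr
    _ = m * (∫⁻ x in X, clsWeight R x ∂π + π X / m) := by
        rw [mul_add, ENNReal.mul_div_cancel hm0 hm_top]

lemma setLIntegral_clsWeight_add_le_of_clsCount_eq (hP : IsBPartition P) (hQ : IsBPartition Q)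
    (hreP : HasRerand P π) (hreQ : HasRerand Q π) (hRP : R ≤ P) (hRQ : R ≤ Q) (n : ℕ∞) :
    ∫⁻ x in clsCount (P ⊔ Q) Set.univ ⁻¹' {n}, clsWeight P x ∂π +
        ∫⁻ x in clsCount (P ⊔ Q) Set.univ ⁻¹' {n}, clsWeight Q x ∂π ≤
      ∫⁻ x in clsCount (P ⊔ Q) Set.univ ⁻¹' {n}, clsWeight R x ∂π +
        ∫⁻ x in clsCount (P ⊔ Q) Set.univ ⁻¹' {n}, clsWeight (P ⊔ Q) x ∂π := by
  set X := clsCount (P ⊔ Q) Set.univ ⁻¹' {n}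
  have hX : MeasurableSet X := (hP.sup hQ).measurable_clsCount .univ .of_discrete
  have key {m : ℕ} (hm : m ≠ 0) (hmn : (m : ℕ∞) ≤ n) :=
    setLIntegral_clsWeight_add_le_of_le_clsCount hP hQ hreP hreQ hRP hRQ hX
      (isSaturated_preimage_clsCount _ _ _) hm fun x (hx : _ = n) => hmn.trans_eq hx.symm
  have hweight : ∫⁻ x in X, clsWeight (P ⊔ Q) x ∂π = π X / (n : ℝ≥0∞) := by
    rw [ENNReal.div_eq_inv_mul, ← setLIntegral_const]
    exact setLIntegral_congr_fun hX fun x (hx : _ = n) => by rw [clsWeight, hx]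
  rw [hweight]
  cases n with
  | top =>
    have hlim : Filter.Tendsto (fun m : ℕ => ∫⁻ x in X, clsWeight R x ∂π + π X / m) Filter.atTop
        (nhds (∫⁻ x in X, clsWeight R x ∂π + π X / ⊤)) := by
      simpa [div_eq_mul_inv] using ((ENNReal.Tendsto.const_mul ENNReal.tendsto_inv_nat_nhds_zero
        (.inr (measure_ne_top π X))).const_add _)
    refine ge_of_tendsto hlim ?_
    filter_upwards [Filter.eventually_ne_atTop 0] with m hm
    exact key hm le_top
  | coe n =>
    rcases eq_or_ne n 0 with rfl | hn
    · have hX_empty : X = ∅ := Set.eq_empty_of_forall_notMem fun x (hx : _ = _) => by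
        simpa [hx] using one_le_clsCount (s := P ⊔ Q) (Set.mem_univ x)
      simp [hX_empty]
    · exact key hn le_rfl

lemma lintegral_clsWeight_add_le (hP : IsBPartition P) (hQ : IsBPartition Q)
    (hreP : HasRerand P π) (hreQ : HasRerand Q π) (hRP : R ≤ P) (hRQ : R ≤ Q) :
    ∫⁻ x, clsWeight P x ∂π + ∫⁻ x, clsWeight Q x ∂π ≤
      ∫⁻ x, clsWeight R x ∂π + ∫⁻ x, clsWeight (P ⊔ Q) x ∂π := by
  simp only [lintegral_eq_tsum_setLIntegral_preimage_singleton
    ((hP.sup hQ).measurable_clsCount .univ) π, ← ENNReal.tsum_add]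
  exact ENNReal.tsum_le_tsum
    (setLIntegral_clsWeight_add_le_of_clsCount_eq hP hQ hreP hreQ hRP hRQ)

end Transport

theorem psi_supermodular_general {J : Type*} [MeasurableSpace J]
    [MeasurableSpace.CountablySeparated J] (π : Measure J) [IsFiniteMeasure π]
    (P Q R : Setoid J) (hP : IsBPartition P) (hQ : IsBPartition Q) (hR : IsBPartition R)
    (hreP : HasRerand P π) (hreQ : HasRerand Q π) (hRP : R ≤ P) (hRQ : R ≤ Q) :
    psi P π + psi Q π ≤ psi R π + psi (P ⊔ Q) π := by
  have hfin (s : Setoid J) : ∫⁻ x, clsWeight s x ∂π ≠ ⊤ := lintegral_clsWeight_ne_top s π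
  rw [hP.psi_eq_toReal_lintegral, hQ.psi_eq_toReal_lintegral, hR.psi_eq_toReal_lintegral,
    (hP.sup hQ).psi_eq_toReal_lintegral, ← ENNReal.toReal_add (hfin P) (hfin Q),
    ← ENNReal.toReal_add (hfin R) (hfin (P ⊔ Q))]
  exact ENNReal.toReal_mono (ENNReal.add_ne_top.2 ⟨hfin R, hfin (P ⊔ Q)⟩)
    (lintegral_clsWeight_add_le hP hQ hreP hreQ hRP hRQ)

/-- If `P`, `Q`, `R` are `B`-partitions of a standard Borel probability
space with the re-randomizing property and `R` refines both `P` and `Q`, then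
`ψ(R) + ψ(P ∨ Q) ≥ ψ(P) + ψ(Q)`. -/
theorem psi_supermodular {J : Type*} [MeasurableSpace J] [StandardBorelSpace J]
    (π : MeasureTheory.Measure J) [IsProbabilityMeasure π]
    (P Q R : Setoid J) (hP : IsBPartition P) (hQ : IsBPartition Q) (hR : IsBPartition R)
    (hreP : HasRerand P π) (hreQ : HasRerand Q π) (hreR : HasRerand R π)
    (hRP : R ≤ P) (hRQ : R ≤ Q) :
    psi P π + psi Q π ≤ psi R π + psi (P ⊔ Q) π :=
  psi_supermodular_general π P Q R hP hQ hR hreP hreQ hRP hRQ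
end

section
/- For a graphing G = (J,B,E,λ), the normalized rank function ρ(X) = 1 − E_u(1/|V(G^X_u)|) on Borel subsets X of E is increasing and submodular: ρ(X∪Y) + ρ(X∩Y) ≤ ρ(X) + ρ(Y). -/
open MeasureTheory

/-- A graphing: a bounded-degree Borel graph `(J, E)` on a standard Borel space together
with a probability measure `μ` satisfying the measure-preservation (intrinsic
mass-transport) equation `∫_A deg_B = ∫_B deg_A`. -/
structure Graphing (J : Type*) [MeasurableSpace J] where
  /-- the (symmetric) adjacency relation -/
  E : J → J → Prop
  symm : ∀ x y, E x y → E y x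
  measE : MeasurableSet {p : J × J | E p.1 p.2}
  /-- the underlying probability measure -/
  μ : Measure J
  prob : IsProbabilityMeasure μ
  /-- the degree bound -/
  D : ℕ
  degFin : ∀ x, {y | E x y}.Finite
  degBound : ∀ x, ({y | E x y}).ncard ≤ D
  mp : ∀ A B : Set J, MeasurableSet A → MeasurableSet B →
    ∫ x in A, (({y ∈ B | E x y}).ncard : ℝ) ∂μ = ∫ x in B, (({y ∈ A | E x y}).ncard : ℝ) ∂μ

namespace Graphing

variable {J : Type*} [MeasurableSpace J]

/-- The edge set of a graphing, as a (symmetric) set of ordered pairs. -/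
def edgeSet (G : Graphing J) : Set (J × J) := {p | G.E p.1 p.2}

/-- A Borel symmetric subset of the edge set of `G`. -/
def IsEdgeSubset (G : Graphing J) (X : Set (J × J)) : Prop :=
  MeasurableSet X ∧ (∀ x y, (x, y) ∈ X → (y, x) ∈ X) ∧ X ⊆ G.edgeSet

/-- The vertex set of the connected component of `x` in the graph with edge set `X`. -/
def compo (X : Set (J × J)) (x : J) : Set J :=
  {y | Relation.ReflTransGen (fun a b => (a, b) ∈ X) x y}

/-- The number of edges of `X` incident with `x`. -/
noncomputable def degX (X : Set (J × J)) (x : J) : ℕ := ({y | (x, y) ∈ X}).ncard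

/-- The average degree `d̄` of a graphing. -/
noncomputable def avgDeg (G : Graphing J) : ℝ := ∫ x, (({y | G.E x y}).ncard : ℝ) ∂G.μ

/-- The edge measure `η` of a graphing: `η(X) = (1/d̄) ∫ deg_X dμ`. -/
noncomputable def eta (G : Graphing J) (X : Set (J × J)) : ℝ :=
  (∫ x, (degX X x : ℝ) ∂G.μ) / G.avgDeg

/-- The normalized rank `ρ(X) = 1 − E_u(1/|V(G^X_u)|)` of a Borel edge set `X`, with the
convention `1/|V| = 0` for infinite components (`Nat.card` of an infinite set is `0`). -/
noncomputable def rho (G : Graphing J) (X : Set (J × J)) : ℝ :=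
  1 - ∫ x, (1 : ℝ) / (Nat.card ↥(compo X x)) ∂G.μ

/-- A graphing is hyperfinite if edge sets of arbitrarily small edge measure can be
removed so that only finite connected components remain. -/
def Hyperfinite (G : Graphing J) : Prop :=
  ∀ ε : ℝ, 0 < ε → ∃ X : Set (J × J), G.IsEdgeSubset X ∧ G.eta X < ε ∧
    ∀ x : J, (compo (G.edgeSet \ X) x).Finite

/-- A set of edges is a forest if for every edge `(a,b)` there is no path from `a` to `b`
avoiding that edge; equivalently, the graph it spans has no cycles. -/
def IsForestSet (X : Set (J × J)) : Prop :=
  ∀ a b : J, (a, b) ∈ X →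
    ¬ Relation.ReflTransGen
        (fun u v => (u, v) ∈ X ∧ ¬((u = a ∧ v = b) ∨ (u = b ∧ v = a))) a b

/-- A graphing is a forest (all components are trees) if its edge set is a forest. -/
def IsForest (G : Graphing J) : Prop := IsForestSet G.edgeSet

end Graphing

/-!
`1 - ρ(X)` is the number of `X`-components per vertex, so the claim is that the numbers of `X`- and
of `Y`-components add up to at most those of `(X ∪ Y)`- and `(X ∩ Y)`-components. Consider the
bipartite graph whose nodes are the `X`-components and the `Y`-components and whose edges are the
`(X ∩ Y)`-components, each joining the two components containing it; its own components correspond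
to the `(X ∪ Y)`-components. In a connected graph, breadth-first search assigns to every node but
one its own edge, namely the edge along which the node is discovered.

To do this simultaneously in all components, the search starts from a measurable set `A` which meets
every `(X ∪ Y)`-component. If `f` is a Borel injection into `(0, ∞)`, the points at which `f` is
within `δ` of its infimum over their component form such a set, and the measure of `A` tends to at
most the density of `(X ∪ Y)`-components as `δ → 0`. Comparing numbers of components per vertex is
an instance of the mass transport principle for the equivalence relation generated by the edges.
That principle holds because, by the measure-preservation equation, the random walk on a graphing is
reversible.
-/

namespace Graphing

open ProbabilityTheory
open scoped ENNReal

section NcardSection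

variable {α β : Type*} [MeasurableSpace α] [StandardBorelSpace α] [MeasurableSpace β]
  [StandardBorelSpace β] {F : Set (α × β)} {D : ℕ}

-- The maximal sections are parametrized injectively by their increasing enumerations.
theorem measurableSet_ncard_section_eq_max (hF : MeasurableSet F)
    (hfin : ∀ x, {y | (x, y) ∈ F}.Finite) (hD : ∀ x, {y | (x, y) ∈ F}.ncard ≤ D) :
    MeasurableSet {x | {y | (x, y) ∈ F}.ncard = D} := by
  obtain ⟨f, hf⟩ := exists_measurableEmbedding_real β
  let _ : LinearOrder β := LinearOrder.lift' f hf.injective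
  let T : Set (α × (Fin D → β)) := {p | StrictMono p.2 ∧ ∀ i, (p.1, p.2 i) ∈ F}
  have ncard_range (p : α × (Fin D → β)) (hp : p ∈ T) : (Set.range p.2).ncard = D := by
    rw [← Set.image_univ, Set.ncard_image_of_injective _ hp.1.injective, Set.ncard_univ,
      Nat.card_fin]
  have range_eq (p : α × (Fin D → β)) (hp : p ∈ T) : Set.range p.2 = {y | (p.1, y) ∈ F} :=
    Set.eq_of_subset_of_ncard_le (Set.range_subset_iff.2 hp.2)
      ((hD p.1).trans_eq (ncard_range p hp).symm) (hfin p.1)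
  have hT : MeasurableSet T := by
    refine measurableSet_setOfPred.2 (.and (.forall fun i => .forall fun j => .imp
      measurable_const (measurableSet_setOfPred.1 ?_))
      (.forall fun i => measurableSet_setOfPred.1 (hF.preimage ?_)))
    · change MeasurableSet {p : α × (Fin D → β) | f (p.2 i) < f (p.2 j)}
      exact measurableSet_lt (hf.measurable.comp (by fun_prop)) (hf.measurable.comp (by fun_prop))
    · fun_prop
  have fst_injOn : Set.InjOn Prod.fst T := fun p hp q hq hpq =>
    Prod.ext hpq ((StrictMono.range_inj hp.1 hq.1).1 (by rw [range_eq p hp, range_eq q hq, hpq]))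
  have fst_image : Prod.fst '' T = {x | {y | (x, y) ∈ F}.ncard = D} := by
    refine Set.Subset.antisymm ?_ fun x hx => ?_
    · rintro _ ⟨p, hp, rfl⟩
      rw [Set.mem_ofPred_eq, ← range_eq p hp, ncard_range p hp]
    · have hcard : (hfin x).toFinset.card = D := by rwa [← Set.ncard_eq_toFinset_card _ (hfin x)]
      exact ⟨(x, (hfin x).toFinset.orderEmbOfFin hcard), ⟨OrderEmbedding.strictMono _,
        fun i => (hfin x).mem_toFinset.1 (Finset.orderEmbOfFin_mem _ hcard i)⟩, rfl⟩
  exact fst_image ▸ hT.image_of_measurable_injOn measurable_fst fst_injOn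

theorem measurable_ncard_section (hF : MeasurableSet F) (hfin : ∀ x, {y | (x, y) ∈ F}.Finite)
    (hD : ∀ x, {y | (x, y) ∈ F}.ncard ≤ D) : Measurable fun x => {y | (x, y) ∈ F}.ncard := by
  classical
  induction D generalizing F with
  | zero => simp only [Nat.le_zero.1 (hD _), measurable_const]
  | succ D ih =>
    set M : Set α := {x | {y | (x, y) ∈ F}.ncard = D + 1}
    have hM : MeasurableSet M := measurableSet_ncard_section_eq_max hF hfin hD
    have section_eq (x : α) :
        {y | (x, y) ∈ F \ Prod.fst ⁻¹' M} = if x ∈ M then ∅ else {y | (x, y) ∈ F} := by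
      ext y
      by_cases hx : x ∈ M <;> simp [hx]
    have ncard_eq (x : α) : {y | (x, y) ∈ F}.ncard =
        if x ∈ M then D + 1 else {y | (x, y) ∈ F \ Prod.fst ⁻¹' M}.ncard := by
      rw [section_eq]
      split_ifs with hx
      exacts [hx, rfl]
    rw [funext ncard_eq]
    refine .ite hM measurable_const (ih (hF.diff (measurable_fst hM))
      (fun x => (hfin x).subset fun y hy => hy.1) fun x => ?_)
    rw [section_eq]
    split_ifs with hx
    · simp
    · exact Nat.le_of_lt_succ ((hD x).lt_of_ne hx)

end NcardSection

section Reversible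

variable {α : Type*} [MeasurableSpace α] {κ η : Kernel α α} {π : Measure α}

theorem kernel_one_apply (x : α) : (1 : Kernel α α) x = Measure.dirac x := Kernel.id_apply x

theorem pow_apply_univ_le {r : ℝ≥0∞} (h : ∀ x, κ x Set.univ ≤ r) (n : ℕ) (x : α) :
    (κ ^ n) x Set.univ ≤ r ^ n := by
  induction n with
  | zero => simp [kernel_one_apply]
  | succ n ih =>
    calc (κ ^ (n + 1)) x Set.univ
      _ = ∫⁻ y, κ y Set.univ ∂(κ ^ n) x := Kernel.pow_succ_apply_eq_lintegral κ n x .univ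
      _ ≤ ∫⁻ _, r ∂(κ ^ n) x := lintegral_mono h
      _ = r * (κ ^ n) x Set.univ := lintegral_const r
      _ ≤ r ^ (n + 1) := by rw [pow_succ']; gcongr

theorem setLIntegral_lintegral_of_isReversible (hκ : κ.IsReversible π) {A : Set α}
    (hA : MeasurableSet A) {g : α → ℝ≥0∞} (hg : Measurable g) :
    ∫⁻ x in A, ∫⁻ y, g y ∂κ x ∂π = ∫⁻ x, κ x A * g x ∂π := by
  have hκA := κ.measurable_coe hA
  have bind_eq : (π.restrict A).bind κ = π.withDensity fun x => κ x A := by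
    ext B hB
    rw [Measure.bind_apply hB κ.measurable.aemeasurable, withDensity_apply _ hB, hκ hA hB]
  rw [← Measure.lintegral_bind κ.measurable.aemeasurable hg.aemeasurable, bind_eq,
    lintegral_withDensity_eq_lintegral_mul _ hκA hg]
  rfl

theorem isReversible_comp (hκ : κ.IsReversible π) (hη : η.IsReversible π)
    (hcomm : κ ∘ₖ η = η ∘ₖ κ) : (κ ∘ₖ η).IsReversible π := by
  intro A B hA hB
  calc ∫⁻ x in A, (κ ∘ₖ η) x B ∂π
    _ = ∫⁻ x, η x A * κ x B ∂π := by
        simp only [Kernel.comp_apply' _ _ _ hB]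
        exact setLIntegral_lintegral_of_isReversible hη hA (κ.measurable_coe hB)
    _ = ∫⁻ x, κ x B * η x A ∂π := by simp only [mul_comm]
    _ = ∫⁻ x in B, (κ ∘ₖ η) x A ∂π := by
        simp only [hcomm, Kernel.comp_apply' _ _ _ hA]
        exact (setLIntegral_lintegral_of_isReversible hκ hB (η.measurable_coe hA)).symm

theorem isReversible_id : (Kernel.id : Kernel α α).IsReversible π := by
  intro A B hA hB
  simp only [Kernel.id_apply, Measure.dirac_apply' _ hA, Measure.dirac_apply' _ hB,
    lintegral_indicator_one hA, lintegral_indicator_one hB]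
  rw [Measure.restrict_apply hA, Measure.restrict_apply hB, Set.inter_comm]

theorem isReversible_pow (hκ : κ.IsReversible π) (n : ℕ) : (κ ^ n).IsReversible π := by
  induction n with
  | zero => exact isReversible_id
  | succ n ih => exact pow_succ κ n ▸ isReversible_comp ih hκ (pow_mul_comm' κ n)

theorem isReversible_sum {ι : Type*} [Countable ι] {κ : ι → Kernel α α}
    (hκ : ∀ i, (κ i).IsReversible π) : (Kernel.sum κ).IsReversible π := by
  intro A B hA hB
  simp only [Kernel.sum_apply' _ _ hA, Kernel.sum_apply' _ _ hB]
  rw [lintegral_tsum fun i => ((κ i).measurable_coe hB).aemeasurable,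
    lintegral_tsum fun i => ((κ i).measurable_coe hA).aemeasurable]
  exact tsum_congr fun i => hκ i hA hB

theorem map_swap_compProd_of_isReversible [IsFiniteMeasure π] [IsFiniteKernel κ]
    (hκ : κ.IsReversible π) : (π ⊗ₘ κ).map Prod.swap = π ⊗ₘ κ := by
  refine Measure.ext_prod fun {A B} hA hB => ?_
  rw [Measure.map_apply measurable_swap (hA.prod hB), Set.preimage_swap_prod,
    Measure.compProd_apply_prod hB hA, Measure.compProd_apply_prod hA hB, hκ hA hB]

theorem lintegral_lintegral_swap_of_isReversible [IsFiniteMeasure π] [IsFiniteKernel κ]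
    (hκ : κ.IsReversible π) {F : α × α → ℝ≥0∞} (hF : Measurable F) :
    ∫⁻ x, ∫⁻ y, F (x, y) ∂κ x ∂π = ∫⁻ x, ∫⁻ y, F (y, x) ∂κ x ∂π := by
  rw [← Measure.lintegral_compProd hF, ← map_swap_compProd_of_isReversible hκ,
    lintegral_map hF measurable_swap,
    Measure.lintegral_compProd (f := fun p => F p.swap) (hF.comp measurable_swap)]
  rfl

theorem setLIntegral_section_inter_swap_of_isReversible [IsFiniteMeasure π] [IsFiniteKernel κ]
    (hκ : κ.IsReversible π) {X : Set (α × α)} (hX : MeasurableSet X)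
    (hsymm : ∀ x y, (x, y) ∈ X → (y, x) ∈ X) {A B : Set α} (hA : MeasurableSet A)
    (hB : MeasurableSet B) :
    ∫⁻ x in A, κ x (B ∩ Prod.mk x ⁻¹' X) ∂π = ∫⁻ x in B, κ x (A ∩ Prod.mk x ⁻¹' X) ∂π := by
  have compProd_eq {A B : Set α} (hA : MeasurableSet A) (hB : MeasurableSet B) :
      ∫⁻ x in A, κ x (B ∩ Prod.mk x ⁻¹' X) ∂π = (π ⊗ₘ κ) (A ×ˢ B ∩ X) := by
    rw [Measure.compProd_apply ((hA.prod hB).inter hX), ← lintegral_indicator hA]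
    refine lintegral_congr fun x => ?_
    by_cases hx : x ∈ A
    · simp only [Set.indicator_of_mem hx, Set.preimage_inter, Set.mk_preimage_prod_right hx]
    · simp [hx]
  have preimage_eq : Prod.swap ⁻¹' X = X :=
    Set.Subset.antisymm (fun p => hsymm p.2 p.1) fun p => hsymm p.1 p.2
  rw [compProd_eq hA hB, compProd_eq hB hA, ← map_swap_compProd_of_isReversible hκ,
    Measure.map_apply measurable_swap ((hA.prod hB).inter hX), Set.preimage_inter,
    Set.preimage_swap_prod, preimage_eq, map_swap_compProd_of_isReversible hκ]

end Reversible

section StepKernel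

variable {J : Type*} [MeasurableSpace J] (G : Graphing J)

instance : IsProbabilityMeasure G.μ := G.prob

theorem finite_neighbors_inter (x : J) (A : Set J) : {y ∈ A | G.E x y}.Finite :=
  (G.degFin x).subset fun _ h => h.2

theorem ncard_neighbors_inter_le (x : J) (A : Set J) : {y ∈ A | G.E x y}.ncard ≤ G.D :=
  (Set.ncard_le_ncard (fun _ h => h.2) (G.degFin x)).trans (G.degBound x)

variable [StandardBorelSpace J]

theorem measurable_ncard_neighbors_inter {T : Set (J × J)} (hT : MeasurableSet T) :
    Measurable fun x => {y ∈ Prod.mk x ⁻¹' T | G.E x y}.ncard :=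
  measurable_ncard_section (hT.inter G.measE)
    (fun x => G.finite_neighbors_inter x (Prod.mk x ⁻¹' T))
    fun x => G.ncard_neighbors_inter_le x (Prod.mk x ⁻¹' T)

theorem smul_count_restrict_neighbors_apply (c : ℝ≥0∞) (x : J) {A : Set J} (hA : MeasurableSet A) :
    (c • Measure.count.restrict {y | G.E x y}) A = c * ({y ∈ A | G.E x y}.ncard : ℝ≥0∞) := by
  have hfin := G.finite_neighbors_inter x A
  have inter_eq : A ∩ {y | G.E x y} = {y ∈ A | G.E x y} := rfl
  rw [Measure.smul_apply, Measure.restrict_apply hA, smul_eq_mul, inter_eq,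
    Measure.count_apply hfin.measurableSet, ← hfin.cast_ncard_eq, ENat.toENNReal_coe]

/-- The substochastic kernel of a random walk with killing: from `x` the walk moves to each of the
neighbours with probability `1 / (2 (D + 1))`, and dies otherwise. The rate does not depend on the
degree of `x`, which makes the kernel symmetric, and the total mass is at most `1 / 2`. -/
noncomputable def stepKernel : Kernel J J where
  toFun x := (2 * (G.D + 1) : ℝ≥0∞)⁻¹ • Measure.count.restrict {y | G.E x y}
  measurable' := by
    refine Measure.measurable_of_measurable_coe _ fun A hA => ?_
    simp only [smul_count_restrict_neighbors_apply _ _ _ hA]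
    have := G.measurable_ncard_neighbors_inter (measurable_snd hA)
    exact ((measurable_of_countable _).comp this).const_mul _

theorem stepKernel_apply (x : J) {A : Set J} (hA : MeasurableSet A) :
    G.stepKernel x A = (2 * (G.D + 1) : ℝ≥0∞)⁻¹ * ({y ∈ A | G.E x y}.ncard : ℝ≥0∞) :=
  G.smul_count_restrict_neighbors_apply _ x hA

theorem stepKernel_univ_le (x : J) : G.stepKernel x Set.univ ≤ 2⁻¹ := by
  rw [G.stepKernel_apply x .univ, ENNReal.mul_inv (by simp) (by simp), mul_assoc]
  refine mul_le_of_le_one_right' ((ENNReal.inv_mul_le_iff (by simp) (by finiteness)).2 ?_)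
  rw [mul_one]
  exact_mod_cast (G.ncard_neighbors_inter_le x Set.univ).trans G.D.le_succ

instance : IsFiniteKernel G.stepKernel := ⟨2⁻¹, by simp, G.stepKernel_univ_le⟩

theorem setIntegral_ncard_neighbors_inter {T : Set (J × J)} (hT : MeasurableSet T) (A : Set J) :
    ∫ x in A, ({y ∈ Prod.mk x ⁻¹' T | G.E x y}.ncard : ℝ) ∂G.μ =
      2 * (G.D + 1) * (∫⁻ x in A, G.stepKernel x (Prod.mk x ⁻¹' T) ∂G.μ).toReal := by
  have toReal_eq (x : J) : (G.stepKernel x (Prod.mk x ⁻¹' T)).toReal =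
      (2 * (G.D + 1) : ℝ)⁻¹ * ({y ∈ Prod.mk x ⁻¹' T | G.E x y}.ncard : ℝ) := by
    rw [G.stepKernel_apply x (measurable_prodMk_left hT), ENNReal.toReal_mul, ENNReal.toReal_inv]
    norm_cast
  rw [← integral_toReal]
  · simp only [toReal_eq]
    rw [integral_const_mul, mul_inv_cancel_left₀ (by positivity)]
  · exact (Kernel.measurable_kernel_prodMk_left hT).aemeasurable
  · exact .of_forall fun x => measure_lt_top _ _

theorem isReversible_stepKernel : G.stepKernel.IsReversible G.μ := by
  intro A B hA hB
  have mp := G.mp A B hA hB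
  have hfin (A : Set J) {B : Set J} (hB : MeasurableSet B) :
      ∫⁻ x in A, G.stepKernel x B ∂G.μ ≠ ∞ := by
    rw [← Measure.bind_apply hB G.stepKernel.measurable.aemeasurable]
    finiteness
  have h1 := G.setIntegral_ncard_neighbors_inter (measurable_snd hB) A
  have h2 := G.setIntegral_ncard_neighbors_inter (measurable_snd hA) B
  exact (ENNReal.toReal_eq_toReal_iff' (hfin A hB) (hfin B hA)).1
    (mul_left_cancel₀ (by positivity) (h1.symm.trans (mp.trans h2)))

/-- The graphing `(J, B, X, λ)` spanned by a Borel symmetric set `X` of edges. -/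
def subgraphing {X : Set (J × J)} (hX : G.IsEdgeSubset X) : Graphing J where
  E x y := (x, y) ∈ X
  symm := hX.2.1
  measE := hX.1
  μ := G.μ
  prob := G.prob
  D := G.D
  degFin x := (G.degFin x).subset fun _ hy => hX.2.2 hy
  degBound x :=
    (Set.ncard_le_ncard (t := {y | G.E x y}) (fun _ hy => hX.2.2 hy) (G.degFin x)).trans
      (G.degBound x)
  mp A B hA hB := by
    have nbr_eq (A : Set J) (x : J) : {y ∈ A | (x, y) ∈ X} =
        {y ∈ Prod.mk x ⁻¹' (Prod.snd ⁻¹' A ∩ X) | G.E x y} :=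
      Set.ext fun y => ⟨fun hy => ⟨hy, hX.2.2 hy.2⟩, And.left⟩
    simp only [nbr_eq]
    rw [G.setIntegral_ncard_neighbors_inter ((measurable_snd hB).inter hX.1),
      G.setIntegral_ncard_neighbors_inter ((measurable_snd hA).inter hX.1)]
    congr 2
    exact setLIntegral_section_inter_swap_of_isReversible G.isReversible_stepKernel hX.1
      hX.2.1 hA hB

theorem isReversible_count_stepKernel : G.stepKernel.IsReversible Measure.count := by
  classical
  intro A B hA hB
  have lintegral_eq {A B : Set J} (hA : MeasurableSet A) (hB : MeasurableSet B) :
      ∫⁻ x in A, G.stepKernel x B ∂Measure.count =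
        ∑' x, ∑' y, if (x ∈ A ∧ y ∈ B) ∧ G.E x y then (2 * (G.D + 1) : ℝ≥0∞)⁻¹ else 0 := by
    rw [← lintegral_indicator hA, lintegral_count]
    refine tsum_congr fun x => ?_
    by_cases hx : x ∈ A
    · have hfin := G.finite_neighbors_inter x B
      have h := ENNReal.tsum_set_const {y ∈ B | G.E x y} (2 * (G.D + 1) : ℝ≥0∞)⁻¹
      rw [tsum_subtype _ fun _ => (2 * (G.D + 1) : ℝ≥0∞)⁻¹, ← hfin.cast_ncard_eq,
        ENat.toENNReal_coe] at h
      rw [Set.indicator_of_mem hx, G.stepKernel_apply x hB, mul_comm, ← h]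
      simp only [hx, true_and, Set.indicator, Set.mem_ofPred_eq]
    · simp [hx]
  rw [lintegral_eq hA hB, lintegral_eq hB hA, ENNReal.tsum_comm]
  simp only [and_comm, fun x y => (⟨G.symm x y, G.symm y x⟩ : G.E x y ↔ G.E y x)]

end StepKernel

section Components

variable {α : Type*} {X Y : Set (α × α)} {x y : α}

theorem self_mem_compo (X : Set (α × α)) (x : α) : x ∈ compo X x := Relation.ReflTransGen.refl

theorem compo_symm (hX : ∀ x y, (x, y) ∈ X → (y, x) ∈ X) (h : y ∈ compo X x) : x ∈ compo X y :=
  Relation.ReflTransGen.mono (fun _ _ => hX _ _) _ _ (Relation.ReflTransGen.swap _ _ h)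

theorem compo_eq (hX : ∀ x y, (x, y) ∈ X → (y, x) ∈ X) (h : y ∈ compo X x) :
    compo X y = compo X x :=
  Set.Subset.antisymm (fun _ hz => h.trans hz) fun _ hz => (compo_symm hX h).trans hz

theorem compo_mono (h : X ⊆ Y) (x : α) : compo X x ⊆ compo Y x :=
  fun _ hy => Relation.ReflTransGen.mono (fun _ _ hab => h hab) _ _ hy

/-- The union of the components of `X` which meet `A`. -/
def sat (X : Set (α × α)) (A : Set α) : Set α := {x | ∃ y ∈ compo X x, y ∈ A}

theorem encard_ne_zero_of_mem {s : Set α} (hx : x ∈ s) : (s.encard : ℝ≥0∞) ≠ 0 := by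
  simpa using Set.Nonempty.ne_empty ⟨x, hx⟩

theorem inv_encard_le_one_of_mem {s : Set α} (hx : x ∈ s) : (s.encard : ℝ≥0∞)⁻¹ ≤ 1 := by
  rw [ENNReal.inv_le_one, ← ENat.toENNReal_one, ENat.toENNReal_le, Set.one_le_encard_iff_nonempty]
  exact ⟨x, hx⟩

theorem tsum_indicator_const (s t : Set α) (c : ℝ≥0∞) :
    ∑' y : s, t.indicator (fun _ => c) (y : α) = (s ∩ t).encard * c := by
  rw [tsum_subtype s (t.indicator fun _ => c), Set.indicator_indicator, ← tsum_subtype,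
    ENNReal.tsum_set_const]

end Components

section WalkKernel

variable {J : Type*} [MeasurableSpace J] [StandardBorelSpace J] (G : Graphing J)

/-- The Green kernel `∑ₙ κⁿ` of the walk `κ = stepKernel`. It weights the points of the component of
`x`, and only those, by positive numbers which are symmetric in the two endpoints; dividing by these
weights turns statements about the kernel into statements about counting in components. -/
noncomputable def walkKernel : Kernel J J := Kernel.sum fun n => G.stepKernel ^ n

theorem walkKernel_apply (x : J) {A : Set J} (hA : MeasurableSet A) :
    G.walkKernel x A = ∑' n, (G.stepKernel ^ n) x A :=
  Kernel.sum_apply' _ x hA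

instance : IsFiniteKernel G.walkKernel := by
  refine ⟨∑' n, 2⁻¹ ^ n, by simp [ENNReal.tsum_geometric], fun x => ?_⟩
  rw [G.walkKernel_apply x .univ]
  exact ENNReal.tsum_le_tsum fun n => pow_apply_univ_le G.stepKernel_univ_le n x

theorem isReversible_walkKernel : G.walkKernel.IsReversible G.μ :=
  isReversible_sum (isReversible_pow G.isReversible_stepKernel)

theorem walkKernel_singleton_comm (x y : J) : G.walkKernel x {y} = G.walkKernel y {x} := by
  have h : G.walkKernel.IsReversible Measure.count :=
    isReversible_sum (isReversible_pow G.isReversible_count_stepKernel)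
  simpa only [lintegral_singleton, Measure.count_singleton, mul_one] using
    h (measurableSet_singleton y) (measurableSet_singleton x) |>.symm

theorem stepKernel_singleton_ne_zero {x y : J} (h : G.E x y) : G.stepKernel x {y} ≠ 0 := by
  rw [G.stepKernel_apply x (measurableSet_singleton y)]
  refine mul_ne_zero (ENNReal.inv_ne_zero.2 (by finiteness)) (Nat.cast_ne_zero.2 ?_)
  exact Set.ncard_ne_zero_of_mem ⟨rfl, h⟩ (G.finite_neighbors_inter x {y})

theorem stepKernel_eq_zero {x : J} {A : Set J} (hA : MeasurableSet A) (h : ∀ y ∈ A, ¬ G.E x y) :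
    G.stepKernel x A = 0 := by
  have empty : {y ∈ A | G.E x y} = ∅ := Set.eq_empty_of_forall_notMem fun y hy => h y hy.1 hy.2
  simp [G.stepKernel_apply x hA, empty]

theorem walkKernel_singleton_ne_zero {x y : J} (h : y ∈ compo G.edgeSet x) :
    G.walkKernel x {y} ≠ 0 := by
  suffices ∃ n, (G.stepKernel ^ n) x {y} ≠ 0 by
    rw [G.walkKernel_apply x (measurableSet_singleton y)]
    exact fun h0 => this.elim fun n hn => hn (ENNReal.tsum_eq_zero.1 h0 n)
  induction h with
  | refl => exact ⟨0, by simp [kernel_one_apply]⟩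
  | @tail b y _ hby ih =>
    obtain ⟨n, hn⟩ := ih
    refine ⟨n + 1, (pos_iff_ne_zero.1 ?_)⟩
    calc 0 < G.stepKernel b {y} * (G.stepKernel ^ n) x {b} :=
          pos_iff_ne_zero.2 (mul_ne_zero (G.stepKernel_singleton_ne_zero hby) hn)
      _ = ∫⁻ z in {b}, G.stepKernel z {y} ∂(G.stepKernel ^ n) x :=
          (lintegral_singleton (fun z => G.stepKernel z {y}) b).symm
      _ ≤ ∫⁻ z, G.stepKernel z {y} ∂(G.stepKernel ^ n) x := setLIntegral_le_lintegral _ _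
      _ = (G.stepKernel ^ (n + 1)) x {y} :=
          (Kernel.pow_succ_apply_eq_lintegral _ n x (measurableSet_singleton y)).symm

theorem countable_compo (x : J) : (compo G.edgeSet x).Countable := by
  have h := Measure.countable_meas_level_set_pos (μ := G.walkKernel x) measurable_id
  exact h.mono fun y hy => pos_iff_ne_zero.2 (G.walkKernel_singleton_ne_zero hy)

theorem measurableSet_compo (x : J) : MeasurableSet (compo G.edgeSet x) :=
  (G.countable_compo x).measurableSet

theorem ae_walkKernel_mem_compo (x : J) : ∀ᵐ y ∂G.walkKernel x, y ∈ compo G.edgeSet x := by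
  have hC := (G.measurableSet_compo x).compl
  refine (G.walkKernel_apply x hC).trans (ENNReal.tsum_eq_zero.2 fun n => ?_)
  induction n with
  | zero => simp [kernel_one_apply, self_mem_compo]
  | succ n ih =>
    rw [Kernel.pow_succ_apply_eq_lintegral _ n x hC]
    refine (lintegral_congr_ae ?_).trans lintegral_zero
    filter_upwards [compl_mem_ae_iff.2 ih] with y hy
    exact G.stepKernel_eq_zero hC fun z hz hyz => hz ((Set.notMem_compl_iff.1 hy).tail hyz)

theorem lintegral_div_walkKernel (x : J) (g : J → ℝ≥0∞) :
    ∫⁻ y, g y / G.walkKernel x {y} ∂G.walkKernel x = ∑' y : compo G.edgeSet x, g y := by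
  rw [← Measure.restrict_eq_self_of_ae_mem (G.ae_walkKernel_mem_compo x),
    lintegral_countable _ (G.countable_compo x)]
  refine tsum_congr fun y => ?_
  rw [Measure.restrict_eq_self_of_ae_mem (G.ae_walkKernel_mem_compo x)]
  exact ENNReal.div_mul_cancel (G.walkKernel_singleton_ne_zero y.2) (measure_ne_top _ _)

theorem measurable_walkKernel_singleton : Measurable fun p : J × J => G.walkKernel p.1 {p.2} := by
  have hdiag : MeasurableSet {q : (J × J) × J | q.2 = q.1.2} :=
    measurableSet_eq_fun (by fun_prop) (by fun_prop)
  have h := Kernel.measurable_kernel_prodMk_left (κ := Kernel.prodMkRight J G.walkKernel) hdiag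
  have preimage_eq (p : J × J) : Prod.mk p ⁻¹' {q : (J × J) × J | q.2 = q.1.2} = {p.2} := rfl
  simpa only [Kernel.prodMkRight_apply, preimage_eq] using h

theorem measurable_tsum_compo {F : J × J → ℝ≥0∞} (hF : Measurable F) :
    Measurable fun x => ∑' y : compo G.edgeSet x, F (x, y) := by
  simp only [← fun x => G.lintegral_div_walkKernel x fun y => F (x, y)]
  exact (hF.div G.measurable_walkKernel_singleton).lintegral_kernel_prod_right'

theorem lintegral_tsum_compo_swap {F : J × J → ℝ≥0∞} (hF : Measurable F) :
    ∫⁻ x, ∑' y : compo G.edgeSet x, F (x, y) ∂G.μ =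
      ∫⁻ x, ∑' y : compo G.edgeSet x, F (y, x) ∂G.μ := by
  have h := lintegral_lintegral_swap_of_isReversible G.isReversible_walkKernel
    (hF.div G.measurable_walkKernel_singleton)
  calc ∫⁻ x, ∑' y : compo G.edgeSet x, F (x, y) ∂G.μ
    _ = ∫⁻ x, ∫⁻ y, F (x, y) / G.walkKernel x {y} ∂G.walkKernel x ∂G.μ :=
        lintegral_congr fun x => (G.lintegral_div_walkKernel x fun y => F (x, y)).symm
    _ = ∫⁻ x, ∫⁻ y, F (y, x) / G.walkKernel y {x} ∂G.walkKernel x ∂G.μ := h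
    _ = ∫⁻ x, ∫⁻ y, F (y, x) / G.walkKernel x {y} ∂G.walkKernel x ∂G.μ := by
        simp only [G.walkKernel_singleton_comm]
    _ = ∫⁻ x, ∑' y : compo G.edgeSet x, F (y, x) ∂G.μ :=
        lintegral_congr fun x => G.lintegral_div_walkKernel x fun y => F (y, x)

end WalkKernel

section NearMin

variable {α : Type*} {X : Set (α × α)} {f : α → ℝ} {δ : ℝ}

/-- The points at which `f` is within `δ` of its infimum over the component. These sets meet every
component, and they shrink to a set meeting each component at most once; the minimizers themselves
would miss the infinite components on which `f` has no minimum. -/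
def nearMin (X : Set (α × α)) (f : α → ℝ) (δ : ℝ) : Set α := {x | ∀ y ∈ compo X x, f x < f y + δ}

theorem nearMin_mono {δ' : ℝ} (h : δ ≤ δ') : nearMin X f δ ⊆ nearMin X f δ' :=
  fun _ hx y hy => (hx y hy).trans_le (by gcongr)

theorem mem_sat_nearMin (hX : ∀ x y, (x, y) ∈ X → (y, x) ∈ X) (hf : ∀ x, 0 ≤ f x) (hδ : 0 < δ)
    (x : α) : x ∈ sat X (nearMin X f δ) := by
  have hne : (f '' compo X x).Nonempty := ⟨f x, x, self_mem_compo X x, rfl⟩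
  have hbdd : BddBelow (f '' compo X x) := ⟨0, Set.forall_mem_image.2 fun y _ => hf y⟩
  obtain ⟨_, ⟨y, hy, rfl⟩, hlt⟩ := exists_lt_of_csInf_lt hne
    (lt_add_of_pos_right (sInf (f '' compo X x)) hδ)
  refine ⟨y, hy, fun z hz => hlt.trans_le ?_⟩
  rw [compo_eq hX hy] at hz
  gcongr
  exact csInf_le hbdd ⟨z, hz, rfl⟩

theorem subsingleton_compo_inter_iInter_nearMin (hX : ∀ x y, (x, y) ∈ X → (y, x) ∈ X)
    (hf : Function.Injective f) (x : α) :
    (compo X x ∩ ⋂ n : ℕ, nearMin X f (1 / ((n : ℝ) + 1))).Subsingleton := by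
  have le_of_mem {y z : α} (hy : y ∈ ⋂ n : ℕ, nearMin X f (1 / ((n : ℝ) + 1)))
      (hz : z ∈ compo X y) : f y ≤ f z := by
    refine le_of_forall_pos_lt_add fun δ hδ => ?_
    obtain ⟨n, hn⟩ := exists_nat_one_div_lt hδ
    exact nearMin_mono hn.le (Set.mem_iInter.1 hy n) z hz
  rintro y ⟨hy, hy'⟩ z ⟨hz, hz'⟩
  exact hf (le_antisymm (le_of_mem hy' (compo_eq hX hy ▸ hz)) (le_of_mem hz' (compo_eq hX hz ▸ hy)))

theorem exists_measurable_injective_pos (J : Type*) [MeasurableSpace J] [StandardBorelSpace J] :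
    ∃ f : J → ℝ, Measurable f ∧ Function.Injective f ∧ ∀ x, 0 < f x := by
  obtain ⟨f, hf⟩ := exists_measurableEmbedding_real J
  exact ⟨fun x => Real.exp (f x), hf.measurable.exp, Real.exp_injective.comp hf.injective,
    fun x => Real.exp_pos _⟩

end NearMin

section ComponentCount

variable {J : Type*} [MeasurableSpace J] [StandardBorelSpace J] (G : Graphing J) {A : Set J}

theorem measurable_encard_compo_inter (hA : MeasurableSet A) :
    Measurable fun x => ((compo G.edgeSet x ∩ A).encard : ℝ≥0∞) := by
  have h := G.measurable_tsum_compo (F := fun p => A.indicator (fun _ => 1) p.2)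
    ((measurable_const.indicator hA).comp measurable_snd)
  simpa only [tsum_indicator_const, mul_one] using h

theorem measurable_encard_compo : Measurable fun x => ((compo G.edgeSet x).encard : ℝ≥0∞) := by
  simpa only [Set.inter_univ] using G.measurable_encard_compo_inter .univ

theorem measurableSet_exists_mem_compo {T : Set (J × J)} (hT : MeasurableSet T) :
    MeasurableSet {x | ∃ y ∈ compo G.edgeSet x, (x, y) ∈ T} := by
  have h := G.measurable_tsum_compo (F := T.indicator 1) (measurable_one.indicator hT)
  have hset : {x | ∃ y ∈ compo G.edgeSet x, (x, y) ∈ T} =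
      {x | ∑' y : compo G.edgeSet x, T.indicator (1 : J × J → ℝ≥0∞) (x, y) = 0}ᶜ := by
    ext x
    simp
  exact hset ▸ (measurableSet_eq_fun h measurable_const).compl

theorem measurableSet_sat (hA : MeasurableSet A) : MeasurableSet (sat G.edgeSet A) :=
  G.measurableSet_exists_mem_compo (measurable_snd hA)

-- Mass transport: every `u` sends the mass `c u` to each point of `A` in its component.
theorem lintegral_encard_compo_inter_mul (hA : MeasurableSet A) {c : J → ℝ≥0∞} (hc : Measurable c)
    (hinv : ∀ x, ∀ y ∈ compo G.edgeSet x, c y = c x) :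
    ∫⁻ u, (compo G.edgeSet u ∩ A).encard * c u ∂G.μ =
      ∫⁻ v in A, (compo G.edgeSet v).encard * c v ∂G.μ := by
  have h := G.lintegral_tsum_compo_swap (F := fun p => A.indicator (fun _ => c p.1) p.2)
    ((hc.comp measurable_fst).indicator (measurable_snd hA))
  rw [← lintegral_indicator hA]
  simp only [tsum_indicator_const] at h
  refine h.trans (lintegral_congr fun v => ?_)
  by_cases hv : v ∈ A
  · simp only [Set.indicator_of_mem hv]
    rw [← ENNReal.tsum_set_const]
    exact tsum_congr fun u => hinv v u u.2
  · simp [hv]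

-- Each finite component meeting `S` distributes its unit mass evenly over its points in `S`.
theorem lintegral_sat_inv_encard_compo_le {S : Set J} (hS : MeasurableSet S) {ψ : J → ℝ≥0∞}
    (hψ : ∀ v ∈ S, ((compo G.edgeSet v ∩ S).encard : ℝ≥0∞)⁻¹ ≤ ψ v) :
    ∫⁻ u in sat G.edgeSet S, ((compo G.edgeSet u).encard : ℝ≥0∞)⁻¹ ∂G.μ ≤ ∫⁻ v in S, ψ v ∂G.μ := by
  set m : J → ℝ≥0∞ := fun u => ((compo G.edgeSet u).encard : ℝ≥0∞)
  set k : J → ℝ≥0∞ := fun u => ((compo G.edgeSet u ∩ S).encard : ℝ≥0∞)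
  have hle (u : J) (hu : u ∈ sat G.edgeSet S) : (m u)⁻¹ ≤ k u * ((k u)⁻¹ * (m u)⁻¹) := by
    obtain ⟨y, hy, hyS⟩ := hu
    by_cases htop : m u = ∞
    · simp [htop]
    · have hk0 : k u ≠ 0 := encard_ne_zero_of_mem (x := y) ⟨hy, hyS⟩
      have hktop : k u ≠ ∞ :=
        ne_top_of_le_ne_top htop (ENat.toENNReal_le.2 (Set.encard_le_encard Set.inter_subset_left))
      rw [← mul_assoc, ENNReal.mul_inv_cancel hk0 hktop, one_mul]
  calc ∫⁻ u in sat G.edgeSet S, (m u)⁻¹ ∂G.μ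
    _ ≤ ∫⁻ u in sat G.edgeSet S, k u * ((k u)⁻¹ * (m u)⁻¹) ∂G.μ :=
        setLIntegral_mono' (G.measurableSet_sat hS) hle
    _ ≤ ∫⁻ u, k u * ((k u)⁻¹ * (m u)⁻¹) ∂G.μ := setLIntegral_le_lintegral _ _
    _ = ∫⁻ v in S, m v * ((k v)⁻¹ * (m v)⁻¹) ∂G.μ :=
        G.lintegral_encard_compo_inter_mul hS
          ((G.measurable_encard_compo_inter hS).inv.mul G.measurable_encard_compo.inv)
          fun x y hy => by simp only [k, m, compo_eq G.symm hy]
    _ ≤ ∫⁻ v in S, ψ v ∂G.μ := by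
        refine setLIntegral_mono' hS fun v hv => (?_ : _ ≤ (k v)⁻¹).trans (hψ v hv)
        rw [mul_left_comm]
        exact mul_le_of_le_one_right' (ENNReal.mul_inv_le_one (m v))

theorem lintegral_sat_inv_encard_compo_le_measure {S : Set J} (hS : MeasurableSet S) :
    ∫⁻ u in sat G.edgeSet S, ((compo G.edgeSet u).encard : ℝ≥0∞)⁻¹ ∂G.μ ≤ G.μ S := by
  rw [← setLIntegral_one]
  exact G.lintegral_sat_inv_encard_compo_le hS fun v hv =>
    inv_encard_le_one_of_mem ⟨self_mem_compo _ v, hv⟩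

theorem lintegral_sat_inv_encard_compo_le_of_subset {Z : Set (J × J)} (hZ : Z ⊆ G.edgeSet)
    {S : Set J} (hS : MeasurableSet S) (hinv : ∀ x ∈ S, compo Z x ⊆ S) :
    ∫⁻ u in sat G.edgeSet S, ((compo G.edgeSet u).encard : ℝ≥0∞)⁻¹ ∂G.μ ≤
      ∫⁻ v in S, ((compo Z v).encard : ℝ≥0∞)⁻¹ ∂G.μ :=
  G.lintegral_sat_inv_encard_compo_le hS fun v hv => ENNReal.inv_le_inv.2 <| ENat.toENNReal_le.2 <|
    Set.encard_le_encard <| Set.subset_inter (compo_mono hZ v) (hinv v hv)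

theorem measure_le_lintegral_inv_encard_compo (hA : MeasurableSet A)
    (hsub : ∀ x, (compo G.edgeSet x ∩ A).Subsingleton) :
    G.μ A ≤ ∫⁻ u, ((compo G.edgeSet u).encard : ℝ≥0∞)⁻¹ ∂G.μ := by
  have hone (u : J) : ((compo G.edgeSet u ∩ A).encard : ℝ≥0∞) ≤ 1 := by
    exact_mod_cast Set.encard_le_one_iff_subsingleton.2 (hsub u)
  have hfinite : ∀ᵐ v ∂G.μ.restrict A, ((compo G.edgeSet v).encard : ℝ≥0∞) < ∞ := by
    refine ae_lt_top G.measurable_encard_compo (ne_top_of_le_ne_top ENNReal.one_ne_top ?_)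
    have h := G.lintegral_encard_compo_inter_mul hA (c := 1) measurable_one fun _ _ _ => rfl
    simp only [Pi.one_apply, mul_one] at h
    calc ∫⁻ v in A, ((compo G.edgeSet v).encard : ℝ≥0∞) ∂G.μ
      _ = ∫⁻ u, ((compo G.edgeSet u ∩ A).encard : ℝ≥0∞) ∂G.μ := h.symm
      _ ≤ ∫⁻ _, 1 ∂G.μ := lintegral_mono hone
      _ = 1 := by simp
  calc G.μ A
    _ = ∫⁻ v in A, (compo G.edgeSet v).encard * ((compo G.edgeSet v).encard : ℝ≥0∞)⁻¹ ∂G.μ := by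
        rw [← setLIntegral_one]
        refine lintegral_congr_ae (hfinite.mono fun v hv => ?_)
        exact (ENNReal.mul_inv_cancel (encard_ne_zero_of_mem (self_mem_compo _ v)) hv.ne).symm
    _ = ∫⁻ u, (compo G.edgeSet u ∩ A).encard * ((compo G.edgeSet u).encard : ℝ≥0∞)⁻¹ ∂G.μ :=
        (G.lintegral_encard_compo_inter_mul hA G.measurable_encard_compo.inv
          fun x y hy => by simp only [Pi.inv_apply, compo_eq G.symm hy]).symm
    _ ≤ ∫⁻ u, ((compo G.edgeSet u).encard : ℝ≥0∞)⁻¹ ∂G.μ :=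
        lintegral_mono fun u => mul_le_of_le_one_left' (hone u)

theorem measurableSet_nearMin {f : J → ℝ} (hf : Measurable f) (δ : ℝ) :
    MeasurableSet (nearMin G.edgeSet f δ) := by
  have h := G.measurableSet_exists_mem_compo (T := {p | f p.2 + δ ≤ f p.1})
    (measurableSet_le (by fun_prop) (by fun_prop))
  have compl_eq : {x | ∃ y ∈ compo G.edgeSet x, f y + δ ≤ f x}ᶜ = nearMin G.edgeSet f δ := by
    ext x
    simp [nearMin]
  exact compl_eq ▸ h.compl

theorem exists_measurableSet_mem_sat_measure_le_add {ε : ℝ≥0∞} (hε : 0 < ε) :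
    ∃ A, MeasurableSet A ∧ (∀ x, x ∈ sat G.edgeSet A) ∧
      G.μ A ≤ ∫⁻ u, ((compo G.edgeSet u).encard : ℝ≥0∞)⁻¹ ∂G.μ + ε := by
  obtain ⟨f, hf, hinj, hpos⟩ := exists_measurable_injective_pos J
  let A (n : ℕ) : Set J := nearMin G.edgeSet f (1 / ((n : ℝ) + 1))
  have hA (n : ℕ) : MeasurableSet (A n) := G.measurableSet_nearMin hf _
  have hanti : Antitone A := fun m n hmn => nearMin_mono (Nat.one_div_le_one_div hmn)
  have hsub (x : J) : (compo G.edgeSet x ∩ ⋂ n, A n).Subsingleton :=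
    subsingleton_compo_inter_iInter_nearMin G.symm hinj x
  have hlim := tendsto_measure_iInter_atTop (μ := G.μ) (fun n => (hA n).nullMeasurableSet) hanti
    ⟨0, measure_ne_top _ _⟩
  obtain ⟨n, hn⟩ := (hlim.eventually_lt_const
    (ENNReal.lt_add_right (measure_ne_top _ _) hε.ne')).exists
  refine ⟨A n, hA n, mem_sat_nearMin G.symm (fun x => (hpos x).le) Nat.one_div_pos_of_nat, ?_⟩
  calc G.μ (A n)
    _ ≤ G.μ (⋂ n, A n) + ε := hn.le
    _ ≤ ∫⁻ u, ((compo G.edgeSet u).encard : ℝ≥0∞)⁻¹ ∂G.μ + ε := by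
        gcongr
        exact G.measure_le_lintegral_inv_encard_compo (.iInter hA) hsub

end ComponentCount

section AlternatingHull

variable {α : Type*} {X Y : Set (α × α)} {A : Set α}

theorem subset_sat (X : Set (α × α)) (A : Set α) : A ⊆ sat X A :=
  fun x hx => ⟨x, self_mem_compo X x, hx⟩

theorem mem_sat_iff_of_mem_compo (hX : ∀ x y, (x, y) ∈ X → (y, x) ∈ X) {x y : α}
    (h : y ∈ compo X x) : y ∈ sat X A ↔ x ∈ sat X A := by
  simp only [sat, Set.mem_ofPred_eq, compo_eq hX h]

/-- Breadth-first search from `A` along components: round `0` reaches the components of `Y` meeting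
`A`, and every further round adds first the components of `X` meeting the points reached so far and
then the components of `Y` meeting these. -/
def alternatingHull (X Y : Set (α × α)) (A : Set α) : ℕ → Set α
  | 0 => sat Y A
  | n + 1 => sat Y (sat X (alternatingHull X Y A n))

/-- The points reached by `alternatingHull` when a component of `X` is added, and not before. -/
def fringe (X Y : Set (α × α)) (A : Set α) : Set α :=
  ⋃ n, sat X (alternatingHull X Y A n) \ alternatingHull X Y A n

theorem sat_alternatingHull_subset (n : ℕ) :
    sat X (alternatingHull X Y A n) ⊆ alternatingHull X Y A (n + 1) := subset_sat Y _

theorem monotone_alternatingHull : Monotone (alternatingHull X Y A) :=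
  monotone_nat_of_le_succ fun n => (subset_sat X _).trans (sat_alternatingHull_subset n)

theorem mem_alternatingHull_iff_of_mem_compo (hY : ∀ x y, (x, y) ∈ Y → (y, x) ∈ Y) {x y : α}
    (h : y ∈ compo Y x) (n : ℕ) :
    y ∈ alternatingHull X Y A n ↔ x ∈ alternatingHull X Y A n := by
  cases n <;> exact mem_sat_iff_of_mem_compo hY h

theorem exists_mem_alternatingHull (hY : ∀ x y, (x, y) ∈ Y → (y, x) ∈ Y) {x : α}
    (hx : x ∈ sat (X ∪ Y) A) : ∃ n, x ∈ alternatingHull X Y A n := by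
  obtain ⟨a, hxa, ha⟩ := hx
  induction hxa using Relation.ReflTransGen.head_induction_on with
  | refl => exact ⟨0, subset_sat Y A ha⟩
  | @head x y hxy _ ih =>
    obtain ⟨n, hn⟩ := ih
    obtain hxy | hxy := hxy
    · exact ⟨n + 1, sat_alternatingHull_subset n ⟨y, .single hxy, hn⟩⟩
    · exact ⟨n, (mem_alternatingHull_iff_of_mem_compo hY (.single hxy) n).1 hn⟩

theorem mem_fringe_iff_of_mem_compo (hX : ∀ x y, (x, y) ∈ X → (y, x) ∈ X)
    (hY : ∀ x y, (x, y) ∈ Y → (y, x) ∈ Y) {x y : α} (hxy : y ∈ compo (X ∩ Y) x) :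
    y ∈ fringe X Y A ↔ x ∈ fringe X Y A := by
  simp only [fringe, Set.mem_iUnion, Set.mem_sdiff,
    mem_sat_iff_of_mem_compo hX (compo_mono Set.inter_subset_left x hxy),
    mem_alternatingHull_iff_of_mem_compo hY (compo_mono Set.inter_subset_right x hxy)]

-- The points at which the search first reaches a component of `X` lie outside the fringe.
theorem mem_sat_compl_fringe (hX : ∀ x y, (x, y) ∈ X → (y, x) ∈ X) {x : α}
    (hx : ∃ n, x ∈ alternatingHull X Y A n) : x ∈ sat X (fringe X Y A)ᶜ := by
  classical
  have hmeet : ∃ n, x ∈ sat X (alternatingHull X Y A n) := hx.imp fun n hn => subset_sat X _ hn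
  obtain ⟨y, hxy, hy⟩ := Nat.find_spec hmeet
  refine ⟨y, hxy, fun hfringe => ?_⟩
  obtain ⟨m, hym, hyn⟩ := Set.mem_iUnion.1 hfringe
  have hlt : m < Nat.find hmeet := lt_of_not_ge fun hle => hyn (monotone_alternatingHull hle hy)
  exact Nat.find_min hmeet hlt ((mem_sat_iff_of_mem_compo hX hxy).1 hym)

-- A component of `Y` which does not meet `A` is first reached at points of the fringe.
theorem mem_sat_fringe_or_mem_sat (hY : ∀ x y, (x, y) ∈ Y → (y, x) ∈ Y) {x : α}
    (hx : ∃ n, x ∈ alternatingHull X Y A n) : x ∈ sat Y (fringe X Y A) ∨ x ∈ sat Y A := by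
  obtain ⟨n, hn⟩ := hx
  induction n with
  | zero => exact .inr hn
  | succ n ih =>
    by_cases hxn : x ∈ alternatingHull X Y A n
    · exact ih hxn
    · obtain ⟨y, hxy, hy⟩ := hn
      exact .inl ⟨y, hxy, Set.mem_iUnion.2
        ⟨n, hy, mt (mem_alternatingHull_iff_of_mem_compo hY hxy n).1 hxn⟩⟩

end AlternatingHull

section ComponentDensity

variable {J : Type*} [MeasurableSpace J] (G : Graphing J) {X Y : Set (J × J)}

/-- The number of components of `X` per vertex, `E_u(1 / |V(G^X_u)|)`, as an extended nonnegative
real; infinite components contribute `∞⁻¹ = 0`. -/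
noncomputable def componentDensity (X : Set (J × J)) : ℝ≥0∞ :=
  ∫⁻ u, ((compo X u).encard : ℝ≥0∞)⁻¹ ∂G.μ

theorem componentDensity_anti (h : X ⊆ Y) : G.componentDensity Y ≤ G.componentDensity X :=
  lintegral_mono fun u => ENNReal.inv_le_inv.2 <| ENat.toENNReal_le.2 <|
    Set.encard_le_encard <| compo_mono h u

theorem componentDensity_ne_top (X : Set (J × J)) : G.componentDensity X ≠ ∞ := by
  refine ne_top_of_le_ne_top ENNReal.one_ne_top ?_
  calc G.componentDensity X
    _ ≤ ∫⁻ _, 1 ∂G.μ := lintegral_mono fun u => inv_encard_le_one_of_mem (self_mem_compo X u)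
    _ = 1 := by simp

variable {G}

theorem IsEdgeSubset.union (hX : G.IsEdgeSubset X) (hY : G.IsEdgeSubset Y) :
    G.IsEdgeSubset (X ∪ Y) :=
  ⟨hX.1.union hY.1, fun x y h => h.imp (hX.2.1 x y) (hY.2.1 x y), Set.union_subset hX.2.2 hY.2.2⟩

theorem IsEdgeSubset.inter (hX : G.IsEdgeSubset X) (hY : G.IsEdgeSubset Y) :
    G.IsEdgeSubset (X ∩ Y) :=
  ⟨hX.1.inter hY.1, fun x y h => ⟨hX.2.1 x y h.1, hY.2.1 x y h.2⟩, fun _ h => hX.2.2 h.1⟩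

variable [StandardBorelSpace J]

theorem rho_eq_one_sub_componentDensity (hX : G.IsEdgeSubset X) :
    G.rho X = 1 - (G.componentDensity X).toReal := by
  have hmeas : Measurable fun u => ((compo X u).encard : ℝ≥0∞)⁻¹ :=
    (G.subgraphing hX).measurable_encard_compo.inv
  have hlt (u : J) : ((compo X u).encard : ℝ≥0∞)⁻¹ < ∞ :=
    (inv_encard_le_one_of_mem (self_mem_compo X u)).trans_lt ENNReal.one_lt_top
  have toReal_eq (u : J) :
      (((compo X u).encard : ℝ≥0∞)⁻¹).toReal = 1 / (Nat.card (compo X u) : ℝ) := by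
    rw [ENNReal.toReal_inv, one_div, Nat.card_coe_set_eq, Set.ncard]
    cases (compo X u).encard <;> simp
  rw [rho, componentDensity, ← integral_toReal hmeas.aemeasurable (.of_forall hlt)]
  simp only [toReal_eq]

theorem measurableSet_alternatingHull (hX : G.IsEdgeSubset X) (hY : G.IsEdgeSubset Y) {A : Set J}
    (hA : MeasurableSet A) (n : ℕ) : MeasurableSet (alternatingHull X Y A n) := by
  induction n with
  | zero => exact (G.subgraphing hY).measurableSet_sat hA
  | succ n ih =>
    exact (G.subgraphing hY).measurableSet_sat ((G.subgraphing hX).measurableSet_sat ih)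

theorem measurableSet_fringe (hX : G.IsEdgeSubset X) (hY : G.IsEdgeSubset Y) {A : Set J}
    (hA : MeasurableSet A) : MeasurableSet (fringe X Y A) :=
  .iUnion fun n =>
    have hn := measurableSet_alternatingHull hX hY hA n
    ((G.subgraphing hX).measurableSet_sat hn).diff hn

theorem componentDensity_le_setLIntegral_compl_fringe (hX : G.IsEdgeSubset X)
    (hY : G.IsEdgeSubset Y) {A : Set J} (hA : MeasurableSet A) (hcov : ∀ x, x ∈ sat (X ∪ Y) A) :
    G.componentDensity X ≤
      ∫⁻ v in (fringe X Y A)ᶜ, ((compo (X ∩ Y) v).encard : ℝ≥0∞)⁻¹ ∂G.μ := by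
  have sat_eq : sat X (fringe X Y A)ᶜ = Set.univ := Set.eq_univ_of_forall fun x =>
    mem_sat_compl_fringe hX.2.1 (exists_mem_alternatingHull hY.2.1 (hcov x))
  rw [componentDensity, ← setLIntegral_univ, ← sat_eq]
  exact (G.subgraphing hX).lintegral_sat_inv_encard_compo_le_of_subset Set.inter_subset_left
    (measurableSet_fringe hX hY hA).compl fun x hx y hy =>
      mt (mem_fringe_iff_of_mem_compo hX.2.1 hY.2.1 hy).1 hx

theorem componentDensity_le_setLIntegral_fringe_add (hX : G.IsEdgeSubset X)
    (hY : G.IsEdgeSubset Y) {A : Set J} (hA : MeasurableSet A) (hcov : ∀ x, x ∈ sat (X ∪ Y) A) :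
    G.componentDensity Y ≤
      ∫⁻ v in fringe X Y A, ((compo (X ∩ Y) v).encard : ℝ≥0∞)⁻¹ ∂G.μ + G.μ A := by
  have sat_eq : sat Y (fringe X Y A) ∪ sat Y A = Set.univ := Set.eq_univ_of_forall fun x =>
    mem_sat_fringe_or_mem_sat hY.2.1 (exists_mem_alternatingHull hY.2.1 (hcov x))
  rw [componentDensity, ← setLIntegral_univ, ← sat_eq]
  refine (lintegral_union_le _ _ _).trans (add_le_add ?_ ?_)
  · exact (G.subgraphing hY).lintegral_sat_inv_encard_compo_le_of_subset Set.inter_subset_right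
      (measurableSet_fringe hX hY hA) fun x hx y hy =>
        (mem_fringe_iff_of_mem_compo hX.2.1 hY.2.1 hy).2 hx
  · exact (G.subgraphing hY).lintegral_sat_inv_encard_compo_le_measure hA

theorem componentDensity_add_le (hX : G.IsEdgeSubset X) (hY : G.IsEdgeSubset Y) :
    G.componentDensity X + G.componentDensity Y ≤
      G.componentDensity (X ∪ Y) + G.componentDensity (X ∩ Y) := by
  refine ENNReal.le_of_forall_pos_le_add fun ε hε _ => ?_
  obtain ⟨A, hA, hcov, hAε⟩ :=
    (G.subgraphing (hX.union hY)).exists_measurableSet_mem_sat_measure_le_add (ENNReal.coe_pos.2 hε)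
  set S := fringe X Y A
  let w (v : J) : ℝ≥0∞ := ((compo (X ∩ Y) v).encard : ℝ≥0∞)⁻¹
  calc G.componentDensity X + G.componentDensity Y
    _ ≤ ∫⁻ v in Sᶜ, w v ∂G.μ + (∫⁻ v in S, w v ∂G.μ + G.μ A) :=
        add_le_add (componentDensity_le_setLIntegral_compl_fringe hX hY hA hcov)
          (componentDensity_le_setLIntegral_fringe_add hX hY hA hcov)
    _ = G.μ A + G.componentDensity (X ∩ Y) := by
        rw [← add_assoc, add_comm (∫⁻ v in Sᶜ, _ ∂_), lintegral_add_compl _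
          (measurableSet_fringe hX hY hA), add_comm]
        rfl
    _ ≤ G.componentDensity (X ∪ Y) + ε + G.componentDensity (X ∩ Y) := by gcongr; exact hAε
    _ = G.componentDensity (X ∪ Y) + G.componentDensity (X ∩ Y) + ε := add_right_comm _ _ _

end ComponentDensity

end Graphing

/-- For a graphing `G`, the normalized rank function
`ρ(X) = 1 − E_u(1/|V(G^X_u)|)` on Borel subsets of the edge set is increasing and
submodular: `ρ(X∪Y) + ρ(X∩Y) ≤ ρ(X) + ρ(Y)`. -/
theorem Graphing.rho_mono_and_submodular {J : Type*} [MeasurableSpace J]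
    [StandardBorelSpace J] (G : Graphing J) :
    (∀ X Y : Set (J × J), G.IsEdgeSubset X → G.IsEdgeSubset Y → X ⊆ Y →
        G.rho X ≤ G.rho Y) ∧
    (∀ X Y : Set (J × J), G.IsEdgeSubset X → G.IsEdgeSubset Y →
        G.rho (X ∪ Y) + G.rho (X ∩ Y) ≤ G.rho X + G.rho Y) := by
  refine ⟨fun X Y hX hY hXY => ?_, fun X Y hX hY => ?_⟩
  · rw [rho_eq_one_sub_componentDensity hX, rho_eq_one_sub_componentDensity hY]
    gcongr
    exacts [G.componentDensity_ne_top X, G.componentDensity_anti hXY]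
  · have hfin := G.componentDensity_ne_top
    have h := ENNReal.toReal_mono (ENNReal.add_ne_top.2 ⟨hfin _, hfin _⟩)
      (componentDensity_add_le hX hY)
    rw [ENNReal.toReal_add (hfin _) (hfin _), ENNReal.toReal_add (hfin _) (hfin _)] at h
    rw [rho_eq_one_sub_componentDensity hX, rho_eq_one_sub_componentDensity hY,
      rho_eq_one_sub_componentDensity (hX.union hY), rho_eq_one_sub_componentDensity (hX.inter hY)]
    linarith
end
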